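/- arXiv:1806.10737 — 3 statements merged into one kernel-verified Lean document; each statement's English description precedes it below -/
import Mathlib

section
/- For every real number α that is algebraic over ℚ and every ε > 0, the set of rational numbers ξ satisfying min{1, |α − ξ|} ≤ H(ξ)^{−(2+ε)} is finite. (Theorem 0.1, Roth's theorem, in the case k = ℚ with S consisting of the archimedean place.) -/
/-- The multiplicative height of a rational number `ξ = p/q` in lowest terms
(`q > 0`): `H(ξ) = max {|p|, q}`. -/
def ratHeight (ξ : ℚ) : ℕ := max ξ.num.natAbs ξ.den


namespace Roth
open MvPolynomial Finset

noncomputable section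

variable {n : ℕ} {R : Type*} [CommRing R]

/-- translation -/
def tr (a : Fin n → R) : MvPolynomial (Fin n) R →ₐ[R] MvPolynomial (Fin n) R :=
  aeval (fun h => X h + C (a h))

/-- product of binomial coefficients -/
def bin (ν μ : Fin n →₀ ℕ) : ℕ := ∏ h, (ν h).choose (μ h)

lemma bin_eq_zero {ν μ : Fin n →₀ ℕ} (h : ¬ μ ≤ ν) : bin ν μ = 0 := by
  rw [Finsupp.le_def] at h
  push Not at h
  obtain ⟨i, hi⟩ := h
  exact prod_eq_zero (mem_univ i) (Nat.choose_eq_zero_of_lt hi)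

lemma bin_le (ν μ : Fin n →₀ ℕ) : bin ν μ ≤ 2 ^ (∑ h, ν h) := by
  unfold bin
  rw [← prod_pow_eq_pow_sum]
  exact prod_le_prod' (fun i _ => Nat.choose_le_two_pow _ _)

lemma coeff_tr_monomial (a : Fin n → R) (ν μ : Fin n →₀ ℕ) (c : R) :
    coeff μ (tr a (monomial ν c)) = c * ((bin ν μ : ℕ) * ∏ h, a h ^ (ν h - μ h)) := by
  classical
  have h1 : tr a (monomial ν c) = C c * ∏ h, ∑ j ∈ range (ν h + 1),
      (X h ^ j * C (a h) ^ (ν h - j) * ((ν h).choose j : MvPolynomial (Fin n) R)) := by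
    rw [tr, aeval_monomial, Finsupp.prod_fintype _ _ (by simp)]
    simp only [add_pow]
    rfl
  rw [h1, coeff_C_mul, prod_univ_sum, coeff_sum]
  congr 1
  have h2 : ∀ f : Fin n → ℕ, coeff μ (∏ h, (X h ^ (f h) * C (a h) ^ (ν h - f h) *
      ((ν h).choose (f h) : MvPolynomial (Fin n) R))) =
      if f = μ then (∏ h, (((ν h).choose (f h) : R) * a h ^ (ν h - f h))) else 0 := by
    intro f
    have : (∏ h, (X h ^ (f h) * C (a h) ^ (ν h - f h) *
      ((ν h).choose (f h) : MvPolynomial (Fin n) R))) =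
      monomial (Finsupp.equivFunOnFinite.symm f) (∏ h, (((ν h).choose (f h) : R) * a h ^ (ν h - f h))) := by
      rw [monomial_eq, Finsupp.prod_fintype _ _ (by simp), map_prod, mul_comm, ← prod_mul_distrib]
      apply prod_congr rfl
      intro h _
      simp
      ring
    rw [this, coeff_monomial]
    congr 1
    rw [Equiv.symm_apply_eq, eq_iff_iff]
    rfl
  simp only [h2]
  rw [Finset.sum_ite_eq']
  split_ifs with h3
  · rw [prod_mul_distrib]; simp [bin]
  · rw [bin_eq_zero]
    · simp
    · intro h4
      apply h3
      simp only [Fintype.mem_piFinset, mem_range]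
      intro i
      have := h4 i
      omega

lemma coeff_tr (a : Fin n → R) (μ : Fin n →₀ ℕ) (P : MvPolynomial (Fin n) R) :
    coeff μ (tr a P) = ∑ ν ∈ P.support, coeff ν P * ((bin ν μ : ℕ) * ∏ h, a h ^ (ν h - μ h)) := by
  conv_lhs => rw [as_sum P]
  rw [map_sum, coeff_sum]
  exact sum_congr rfl (fun ν _ => coeff_tr_monomial _ _ _ _)

lemma tr_tr (a b : Fin n → R) (P : MvPolynomial (Fin n) R) :
    tr a (tr b P) = tr (fun h => a h + b h) P := by
  have : (tr a).comp (tr b) = tr (fun h => a h + b h) := by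
    apply algHom_ext
    intro i
    simp [tr, add_assoc]
  exact DFunLike.congr_fun this P

lemma tr_zero (P : MvPolynomial (Fin n) R) : tr (fun _ => (0 : R)) P = P := by
  have : tr (fun _ => (0 : R)) = AlgHom.id R (MvPolynomial (Fin n) R) := by
    apply algHom_ext
    intro i
    simp [tr]
  rw [this]; rfl

lemma tr_ne_zero (a : Fin n → R) {P : MvPolynomial (Fin n) R} (h : P ≠ 0) : tr a P ≠ 0 := by
  intro h0
  apply h
  have := tr_tr (fun h => - a h) a P
  simp only [neg_add_cancel] at this
  rw [h0, tr_zero, map_zero] at this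
  exact this.symm

/-- index at least t -/
def Ind (w : Fin n → ℝ) (t : ℝ) (f : MvPolynomial (Fin n) R) : Prop :=
  ∀ ν ∈ f.support, t ≤ ∑ h, w h * ν h

lemma Ind.mul {w : Fin n → ℝ} {s t : ℝ} {f g : MvPolynomial (Fin n) R}
    (hf : Ind w s f) (hg : Ind w t g) : Ind w (s + t) (f * g) := by
  classical
  intro ν hν
  have := support_mul f g hν
  rw [Finset.mem_add] at this
  obtain ⟨a, ha, b, hb, rfl⟩ := this
  have h1 := hf a ha
  have h2 := hg b hb
  simp only [Finsupp.add_apply, Nat.cast_add, mul_add, sum_add_distrib]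
  linarith

lemma Ind.sum {ι : Type*} {w : Fin n → ℝ} {t : ℝ} {s : Finset ι} {f : ι → MvPolynomial (Fin n) R}
    (hf : ∀ i ∈ s, Ind w t (f i)) : Ind w t (∑ i ∈ s, f i) := by
  classical
  intro ν hν
  have := support_sum hν
  rw [mem_biUnion] at this
  obtain ⟨i, hi, h⟩ := this
  exact hf i hi ν h

lemma Ind.one (w : Fin n → ℝ) : Ind w 0 (1 : MvPolynomial (Fin n) R) := by
  classical
  intro ν hν
  rw [mem_support_iff, coeff_one] at hν
  have : 0 = ν := by by_contra h; simp [h] at hν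
  simp [← this]

lemma Ind.prod {ι : Type*} {w : Fin n → ℝ} {t : ι → ℝ} {s : Finset ι}
    {f : ι → MvPolynomial (Fin n) R}
    (hf : ∀ i ∈ s, Ind w (t i) (f i)) : Ind w (∑ i ∈ s, t i) (∏ i ∈ s, f i) := by
  classical
  induction s using Finset.induction_on with
  | empty => simpa using Ind.one w
  | insert a s ha ih =>
    rw [sum_insert ha, prod_insert ha]
    exact (hf a (mem_insert_self _ _)).mul (ih (fun i hi => hf i (mem_insert_of_mem hi)))

lemma Ind.zsmul {w : Fin n → ℝ} {t : ℝ} {f : MvPolynomial (Fin n) R} (u : ℤˣ)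
    (hf : Ind w t f) : Ind w t (u • f) := by
  intro ν hν
  apply hf
  rw [mem_support_iff] at *
  rcases Int.units_eq_one_or u with rfl | rfl <;> simpa using hν

lemma Ind.det {k : ℕ} {w : Fin n → ℝ} {t : Fin k → ℝ}
    {M : Matrix (Fin k) (Fin k) (MvPolynomial (Fin n) R)}
    (hM : ∀ i l, Ind w (t l) (M i l)) : Ind w (∑ l, t l) M.det := by
  rw [Matrix.det_apply]
  apply Ind.sum
  intro σ _
  apply Ind.zsmul
  exact Ind.prod (fun i _ => hM _ _)

/-- degree bound -/
def DegLE (r : Fin n → ℕ) (f : MvPolynomial (Fin n) R) : Prop :=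
  ∀ ν ∈ f.support, ∀ h, ν h ≤ r h

lemma DegLE.mul {r s : Fin n → ℕ} {f g : MvPolynomial (Fin n) R}
    (hf : DegLE r f) (hg : DegLE s g) : DegLE (r + s) (f * g) := by
  classical
  intro ν hν
  have := support_mul f g hν
  rw [Finset.mem_add] at this
  obtain ⟨a, ha, b, hb, rfl⟩ := this
  intro h
  exact add_le_add (hf a ha h) (hg b hb h)

lemma DegLE.prod {ι : Type*} {r : Fin n → ℕ} {s : Finset ι}
    {f : ι → MvPolynomial (Fin n) R}
    (hf : ∀ i ∈ s, DegLE r (f i)) : DegLE (s.card • r) (∏ i ∈ s, f i) := by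
  classical
  induction s using Finset.induction_on with
  | empty =>
    intro ν hν
    rw [prod_empty, mem_support_iff, coeff_one] at hν
    have : 0 = ν := by by_contra h; simp [h] at hν
    simp [← this]
  | insert a s ha ih =>
    rw [card_insert_of_notMem ha, prod_insert ha, add_smul, one_smul, add_comm]
    exact (hf a (mem_insert_self _ _)).mul (ih (fun i hi => hf i (mem_insert_of_mem hi)))

lemma DegLE.det {k : ℕ} {r : Fin n → ℕ}
    {M : Matrix (Fin k) (Fin k) (MvPolynomial (Fin n) R)}
    (hM : ∀ i l, DegLE r (M i l)) : DegLE (k • r) M.det := by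
  classical
  intro ν hν
  rw [Matrix.det_apply] at hν
  have := support_sum hν
  rw [mem_biUnion] at this
  obtain ⟨σ, -, h⟩ := this
  have h2 : DegLE (k • r) (∏ i, M (σ i) i) := by
    simpa using DegLE.prod (s := Finset.univ) (f := fun i => M (σ i) i) (r := r) (fun i _ => hM _ _)
  apply h2
  rw [mem_support_iff] at *
  rcases Int.units_eq_one_or (Equiv.Perm.sign σ) with h1 | h1 <;> rw [h1] at h <;> simpa using h

/-- Hasse derivative -/
def hasse (μ : Fin n →₀ ℕ) (P : MvPolynomial (Fin n) R) : MvPolynomial (Fin n) R :=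
  ∑ ν ∈ P.support, monomial (ν - μ) (coeff ν P * (bin ν μ : R))

lemma coeff_hasse (μ κ : Fin n →₀ ℕ) (P : MvPolynomial (Fin n) R) :
    coeff κ (hasse μ P) = coeff (κ + μ) P * (bin (κ + μ) μ : R) := by
  classical
  rw [hasse, coeff_sum]
  simp only [coeff_monomial]
  rw [sum_eq_single (κ + μ)]
  · simp
  · intro ν _ hne
    split_ifs with h
    · rw [bin_eq_zero]
      · simp
      · intro h2
        apply hne
        rw [← h, tsub_add_cancel_of_le h2]
    · rfl
  · intro h
    rw [notMem_support_iff] at h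
    simp [h]

lemma hasse_zero (P : MvPolynomial (Fin n) R) : hasse 0 P = P := by
  ext κ
  rw [coeff_hasse]
  simp [bin]

lemma pderiv_hasse (μ : Fin n →₀ ℕ) (i : Fin n) (P : MvPolynomial (Fin n) R) :
    pderiv i (hasse μ P) = ((μ i + 1 : ℕ) : R) • hasse (μ + Finsupp.single i 1) P := by
  ext κ
  rw [coeff_pderiv, coeff_smul, coeff_hasse, coeff_hasse]
  have e : κ + Finsupp.single i 1 + μ = κ + (μ + Finsupp.single i 1) := by abel
  rw [e, smul_eq_mul]
  have key : bin (κ + (μ + Finsupp.single i 1)) μ * (κ i + 1) =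
    (μ i + 1) * bin (κ + (μ + Finsupp.single i 1)) (μ + Finsupp.single i 1) := by
    unfold bin
    rw [← mul_prod_erase _ _ (mem_univ i), ← mul_prod_erase _ _ (mem_univ i)]
    have : ∀ x ∈ univ.erase i, ((κ + (μ + Finsupp.single i 1) : Fin n →₀ ℕ) x).choose (μ x) =
       ((κ + (μ + Finsupp.single i 1) : Fin n →₀ ℕ) x).choose ((μ + Finsupp.single i 1 : Fin n →₀ ℕ) x) := by
      intro x hx
      have : x ≠ i := (mem_erase.1 hx).1
      simp [Finsupp.single_apply, this.symm]
    rw [prod_congr rfl this]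
    simp only [Finsupp.add_apply, Finsupp.single_eq_same]
    have h := Nat.choose_succ_right_eq (κ i + (μ i + 1)) (μ i)
    have h2 : κ i + (μ i + 1) - μ i = κ i + 1 := by omega
    rw [h2] at h
    rw [mul_right_comm, ← h]
    ring
  have key' := congrArg (Nat.cast : ℕ → R) key
  push_cast at key' ⊢
  linear_combination (coeff (κ + (μ + Finsupp.single i 1)) P) * key'

lemma pderiv_tr (a : Fin n → R) (i : Fin n) (P : MvPolynomial (Fin n) R) :
    pderiv i (tr a P) = tr a (pderiv i P) := by
  classical
  induction P using MvPolynomial.induction_on with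
  | C c => simp [tr]
  | add p q hp hq => simp [hp, hq]
  | mul_X p j hp =>
    rw [map_mul, pderiv_mul, pderiv_mul, hp, map_add, map_mul, map_mul]
    congr 2
    simp only [tr, aeval_X, map_add, pderiv_C, add_zero, pderiv_X, Pi.single_apply]
    split_ifs <;> simp

lemma hasse_tr (a : Fin n → ℚ) (P : MvPolynomial (Fin n) ℚ) :
    ∀ (d : ℕ) (μ : Fin n →₀ ℕ), (∑ h, μ h) = d → hasse μ (tr a P) = tr a (hasse μ P) := by
  intro d
  induction d with
  | zero =>
    intro μ hμ
    have : μ = 0 := by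
      ext i
      simpa using (sum_eq_zero_iff.1 hμ) i (mem_univ i)
    rw [this, hasse_zero, hasse_zero]
  | succ d ih =>
    intro μ hμ
    have : ∃ i, μ i ≠ 0 := by
      by_contra hcon
      push Not at hcon
      simp [hcon] at hμ
    obtain ⟨i, hi⟩ := this
    have hle : Finsupp.single i 1 ≤ μ := by
      rw [Finsupp.single_le_iff]; omega
    obtain ⟨κ, rfl⟩ : ∃ κ, μ = κ + Finsupp.single i 1 := ⟨μ - Finsupp.single i 1, (tsub_add_cancel_of_le hle).symm⟩
    have hκ : ∑ h, κ h = d := by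
      simp only [Finsupp.add_apply, sum_add_distrib] at hμ
      simp only [Finsupp.single_apply, sum_ite_eq, mem_univ, if_true] at hμ
      omega
    have h1 := pderiv_hasse κ i (tr a P)
    rw [ih κ hκ, pderiv_tr, pderiv_hasse, map_smul] at h1
    have h2 : ((κ i + 1 : ℕ) : ℚ) ≠ 0 := by positivity
    exact (smul_right_injective _ h2 h1).symm

lemma Ind.hasse {w : Fin n → ℝ} {t : ℝ} {f : MvPolynomial (Fin n) R} (μ : Fin n →₀ ℕ)
    (hf : Ind w t f) : Ind w (t - ∑ h, w h * μ h) (hasse μ f) := by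
  intro κ hκ
  rw [mem_support_iff, coeff_hasse] at hκ
  have := hf (κ + μ) (mem_support_iff.2 (left_ne_zero_of_mul hκ))
  simp only [Finsupp.add_apply, Nat.cast_add, mul_add, sum_add_distrib] at this
  linarith

lemma DegLE.hasse {r : Fin n → ℕ} {f : MvPolynomial (Fin n) R} (μ : Fin n →₀ ℕ)
    (hf : DegLE r f) : DegLE r (hasse μ f) := by
  intro κ hκ h
  rw [mem_support_iff, coeff_hasse] at hκ
  have := hf (κ + μ) (mem_support_iff.2 (left_ne_zero_of_mul hκ)) h
  simp only [Finsupp.add_apply] at this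
  omega

/-- L1 norm -/
def nrm (f : MvPolynomial (Fin n) ℚ) : ℝ := ∑ ν ∈ f.support, |((coeff ν f : ℚ) : ℝ)|

lemma nrm_eq {f : MvPolynomial (Fin n) ℚ} {s : Finset (Fin n →₀ ℕ)} (h : f.support ⊆ s) :
    nrm f = ∑ ν ∈ s, |((coeff ν f : ℚ) : ℝ)| := by
  apply sum_subset h
  intro x _ hx
  rw [notMem_support_iff] at hx
  simp [hx]

lemma nrm_nonneg (f : MvPolynomial (Fin n) ℚ) : 0 ≤ nrm f := sum_nonneg (fun _ _ => abs_nonneg _)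

lemma nrm_zero : nrm (0 : MvPolynomial (Fin n) ℚ) = 0 := by simp [nrm]

lemma nrm_add (f g : MvPolynomial (Fin n) ℚ) : nrm (f + g) ≤ nrm f + nrm g := by
  classical
  rw [nrm_eq (f := f) (s := f.support ∪ g.support) subset_union_left,
    nrm_eq (f := g) (s := f.support ∪ g.support) subset_union_right,
    nrm_eq (f := f + g) (s := f.support ∪ g.support) support_add, ← sum_add_distrib]
  apply sum_le_sum
  intro i _
  rw [coeff_add, Rat.cast_add]
  exact abs_add_le _ _

lemma nrm_sum {ι : Type*} (s : Finset ι) (f : ι → MvPolynomial (Fin n) ℚ) :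
    nrm (∑ i ∈ s, f i) ≤ ∑ i ∈ s, nrm (f i) := by
  classical
  induction s using Finset.induction_on with
  | empty => simp [nrm_zero]
  | insert a s ha ih =>
    rw [sum_insert ha, sum_insert ha]
    exact (nrm_add _ _).trans (by linarith)

lemma nrm_monomial (ν : Fin n →₀ ℕ) (c : ℚ) : nrm (monomial ν c) = |(c : ℝ)| := by
  rw [nrm_eq support_monomial_subset]
  simp

lemma nrm_mul (f g : MvPolynomial (Fin n) ℚ) : nrm (f * g) ≤ nrm f * nrm g := by
  have : f * g = ∑ a ∈ f.support, ∑ b ∈ g.support, monomial (a + b) (coeff a f * coeff b g) := by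
    conv_lhs => rw [as_sum f, as_sum g]
    rw [sum_mul_sum]
    simp [monomial_mul]
  have h2 : nrm f * nrm g = ∑ a ∈ f.support, ∑ b ∈ g.support, |((coeff a f : ℚ) : ℝ)| * |((coeff b g : ℚ) : ℝ)| := by
    rw [nrm, nrm, sum_mul_sum]
  rw [this, h2]
  refine (nrm_sum _ _).trans (sum_le_sum fun a _ => (nrm_sum _ _).trans (sum_le_sum fun b _ => ?_))
  rw [nrm_monomial, Rat.cast_mul, abs_mul]

lemma nrm_one : nrm (1 : MvPolynomial (Fin n) ℚ) = 1 := by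
  have := nrm_monomial (0 : Fin n →₀ ℕ) 1
  simpa using this

lemma nrm_prod {ι : Type*} (s : Finset ι) (f : ι → MvPolynomial (Fin n) ℚ) :
    nrm (∏ i ∈ s, f i) ≤ ∏ i ∈ s, nrm (f i) := by
  classical
  induction s using Finset.induction_on with
  | empty => simp [nrm_one]
  | insert a s ha ih =>
    rw [prod_insert ha, prod_insert ha]
    exact (nrm_mul _ _).trans (mul_le_mul_of_nonneg_left ih (nrm_nonneg _))

lemma nrm_neg (f : MvPolynomial (Fin n) ℚ) : nrm (-f) = nrm f := by
  simp [nrm, support_neg]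

lemma nrm_det {k : ℕ} {M : Matrix (Fin k) (Fin k) (MvPolynomial (Fin n) ℚ)} {B : ℝ}
    (hM : ∀ i l, nrm (M i l) ≤ B) : nrm M.det ≤ k.factorial * B ^ k := by
  rw [Matrix.det_apply]
  refine (nrm_sum _ _).trans ?_
  have : ∀ σ : Equiv.Perm (Fin k), nrm (Equiv.Perm.sign σ • ∏ i, M (σ i) i) ≤ B ^ k := by
    intro σ
    have h1 : nrm (Equiv.Perm.sign σ • ∏ i, M (σ i) i) = nrm (∏ i, M (σ i) i) := by
      rcases Int.units_eq_one_or (Equiv.Perm.sign σ) with h1 | h1 <;> rw [h1] <;> simp [nrm_neg]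
    rw [h1]
    refine (nrm_prod _ _).trans ((prod_le_prod (fun _ _ => nrm_nonneg _) (fun i _ => hM _ _)).trans ?_)
    simp
  refine (sum_le_sum (fun σ _ => this σ)).trans ?_
  simp [Fintype.card_perm]

lemma nrm_hasse {r : Fin n → ℕ} {f : MvPolynomial (Fin n) ℚ} (hf : DegLE r f) (μ : Fin n →₀ ℕ) :
    nrm (hasse μ f) ≤ 2 ^ (∑ h, r h) * nrm f := by
  rw [hasse]
  refine (nrm_sum _ _).trans ?_
  rw [nrm, mul_sum]
  apply sum_le_sum
  intro ν hν
  rw [nrm_monomial, Rat.cast_mul, abs_mul, mul_comm]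
  apply mul_le_mul_of_nonneg_right _ (abs_nonneg _)
  have h1 := bin_le ν μ
  have h2 : 2 ^ (∑ h, ν h) ≤ 2 ^ (∑ h, r h) := Nat.pow_le_pow_right (by norm_num) (sum_le_sum fun h _ => hf ν hν h)
  rw [Rat.cast_natCast, Nat.abs_cast]
  exact_mod_cast h1.trans h2

/-- integer coefficients -/
def IsInt (f : MvPolynomial (Fin n) ℚ) : Prop := ∀ ν, ∃ z : ℤ, coeff ν f = z

lemma isInt_iff (f : MvPolynomial (Fin n) ℚ) :
    IsInt f ↔ ∃ g : MvPolynomial (Fin n) ℤ, map (Int.castRingHom ℚ) g = f := by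
  constructor
  · intro h
    choose z hz using h
    refine ⟨∑ ν ∈ f.support, monomial ν (z ν), ?_⟩
    rw [map_sum]
    conv_rhs => rw [as_sum f]
    apply sum_congr rfl
    intro ν _
    rw [map_monomial, hz ν]
    rfl
  · rintro ⟨g, rfl⟩ ν
    exact ⟨coeff ν g, by simp [coeff_map]⟩

lemma IsInt.det {k : ℕ} {M : Matrix (Fin k) (Fin k) (MvPolynomial (Fin n) ℚ)}
    (hM : ∀ i l, IsInt (M i l)) : IsInt M.det := by
  simp only [isInt_iff] at hM
  choose g hg using hM
  rw [isInt_iff]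
  refine ⟨(Matrix.of g).det, ?_⟩
  rw [RingHom.map_det]
  congr 1
  ext1 i l
  exact hg i l

lemma IsInt.hasse {f : MvPolynomial (Fin n) ℚ} (hf : IsInt f) (μ : Fin n →₀ ℕ) :
    IsInt (hasse μ f) := by
  intro ν
  obtain ⟨z, hz⟩ := hf (ν + μ)
  exact ⟨z * bin (ν + μ) μ, by rw [coeff_hasse, hz]; push_cast; rfl⟩

end
end Roth


namespace Roth
open MvPolynomial Finset

noncomputable section

variable {n : ℕ}

lemma exists_const {k : ℕ} (N : (Fin k → MvPolynomial (Fin n) ℚ) → Prop)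
    (hN : ∀ c, N c → ∀ i, N (fun j => pderiv i (c j))) :
    ∀ (T : ℕ) (c : Fin k → MvPolynomial (Fin n) ℚ), N c → c ≠ 0 →
      (∀ j, ∀ ν ∈ (c j).support, ∑ h, ν h ≤ T) →
      ∃ a : Fin k → ℚ, a ≠ 0 ∧ N (fun j => C (a j)) := by
  intro T
  induction T with
  | zero =>
    intro c hc h0 hT
    have hcc : c = fun j => C (coeff 0 (c j)) := by
      funext j
      ext ν
      rw [coeff_C]
      split_ifs with h
      · rw [← h]
      · by_contra hne
        have := hT j ν (mem_support_iff.2 hne)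
        apply h
        ext i
        simpa using ((sum_eq_zero_iff.1 (Nat.le_zero.1 this)) i (mem_univ i)).symm
    refine ⟨fun j => coeff 0 (c j), ?_, hcc ▸ hc⟩
    intro h
    apply h0
    rw [hcc]
    funext j
    have := congrFun h j
    simp only [Pi.zero_apply] at this
    simp [this]
  | succ T ih =>
    intro c hc h0 hT
    by_cases hcon : ∀ j, ∀ ν ∈ (c j).support, ∀ i, ν i = 0
    · apply ih c hc h0
      intro j ν hν
      simp [hcon j ν hν]
    · push Not at hcon
      obtain ⟨j, ν, hν, i, hi⟩ := hcon
      apply ih _ (hN c hc i)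
      · intro h
        have h1 := congrArg (coeff (ν - Finsupp.single i 1)) (congrFun h j)
        simp only [Pi.zero_apply, coeff_zero] at h1
        rw [coeff_pderiv, tsub_add_cancel_of_le (by rw [Finsupp.single_le_iff]; omega)] at h1
        rw [mem_support_iff] at hν
        rcases mul_eq_zero.1 h1 with h2 | h2
        · exact hν h2
        · have : (0:ℚ) ≤ ((ν - Finsupp.single i 1 : Fin n →₀ ℕ) i : ℚ) := Nat.cast_nonneg _
          linarith
      · intro j κ hκ
        rw [mem_support_iff, coeff_pderiv] at hκ
        have := hT j _ (mem_support_iff.2 (left_ne_zero_of_mul hκ))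
        simp only [Finsupp.add_apply, sum_add_distrib, Finsupp.single_apply, sum_ite_eq, mem_univ, if_true] at this
        omega

abbrev KK (n : ℕ) := FractionRing (MvPolynomial (Fin n) ℚ)

def row {k : ℕ} (φ : Fin k → MvPolynomial (Fin n) ℚ) (μ : Fin n →₀ ℕ) : Fin k → KK n :=
  fun j => algebraMap _ (KK n) (hasse μ (φ j))

lemma wronsk_aux {k : ℕ} {φ : Fin k → MvPolynomial (Fin n) ℚ} (hφ : LinearIndependent ℚ φ) :
    ∀ i, i ≤ k → ∃ μ : Fin i → (Fin n →₀ ℕ), (∀ l, ∑ h, μ l h < i) ∧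
      LinearIndependent (KK n) (fun l => row φ (μ l)) := by
  intro i
  induction i with
  | zero =>
    intro _
    exact ⟨fun _ => 0, fun l => l.elim0, linearIndependent_empty_type⟩
  | succ i ih =>
    intro hik
    obtain ⟨μ, hμ, hli⟩ := ih (by omega)
    set S := Submodule.span (KK n) (Set.range (fun l => row φ (μ l))) with hS
    by_cases hex : ∃ κ : Fin n →₀ ℕ, ∑ h, κ h ≤ i ∧ row φ κ ∉ S
    · obtain ⟨κ, hκ, hκS⟩ := hex
      refine ⟨Fin.snoc (α := fun _ => Fin n →₀ ℕ) μ κ, ?_, ?_⟩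
      · intro l
        refine Fin.lastCases ?_ (fun l => ?_) l
        · simp only [Fin.snoc_last]; omega
        · simp only [Fin.snoc_castSucc]
          have := hμ l
          omega
      · have h1 := linearIndependent_finSnoc.2 ⟨hli, hκS⟩
        have h2 : (fun l => row φ (Fin.snoc (α := fun _ => Fin n →₀ ℕ) μ κ l)) =
            Fin.snoc (α := fun _ => Fin k → KK n) (fun l => row φ (μ l)) (row φ κ) := by
          funext l
          refine Fin.lastCases ?_ (fun l => ?_) l
          · simp only [Fin.snoc_last]
          · simp only [Fin.snoc_castSucc]
        rw [h2]
        exact h1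
    · exfalso
      push Not at hex
      have hlt : S < ⊤ := by
        rw [lt_top_iff_ne_top]
        intro htop
        have h1 := finrank_range_le_card (R := KK n) (fun l => row φ (μ l))
        rw [Set.finrank, ← hS, htop, finrank_top] at h1
        simp at h1
        omega
      obtain ⟨f, hf0, hfS⟩ := Submodule.exists_le_ker_of_lt_top S hlt
      have hfx : ∀ x : Fin k → KK n, f x = ∑ j, x j * f (Pi.single j 1) := by
        intro x
        conv_lhs => rw [pi_eq_sum_univ' x, map_sum]
        apply sum_congr rfl
        intro j _
        rw [map_smul, smul_eq_mul]
      obtain ⟨b, hb⟩ := IsLocalization.exist_integer_multiples_of_finite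
        (nonZeroDivisors (MvPolynomial (Fin n) ℚ)) (fun j => f (Pi.single j 1))
      choose c hc using hb
      let N : (Fin k → MvPolynomial (Fin n) ℚ) → Prop := fun c =>
        ∀ l, ∑ j, c j * hasse (μ l) (φ j) = 0
      have hNall : ∀ c, N c → ∀ κ : Fin n →₀ ℕ, ∑ h, κ h ≤ i → ∑ j, c j * hasse κ (φ j) = 0 := by
        intro c hNc κ hκ
        let g : (Fin k → KK n) →ₗ[KK n] KK n :=
          ∑ j, (algebraMap _ (KK n) (c j)) • LinearMap.proj j
        have hg : ∀ κ, g (row φ κ) = algebraMap _ (KK n) (∑ j, c j * hasse κ (φ j)) := by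
          intro κ
          simp [g, row, Algebra.smul_def]
        have hle : S ≤ LinearMap.ker g := by
          rw [hS, Submodule.span_le]
          rintro _ ⟨l, rfl⟩
          simp only [SetLike.mem_coe, LinearMap.mem_ker]
          rw [hg, hNc l, map_zero]
        have := hle (hex κ hκ)
        rw [LinearMap.mem_ker, hg] at this
        exact (IsFractionRing.to_map_eq_zero_iff).1 this
      have hcN : N c := by
        intro l
        apply (IsFractionRing.to_map_eq_zero_iff (K := KK n)).1
        have h1 : f (row φ (μ l)) = 0 := hfS (Submodule.subset_span ⟨l, rfl⟩)
        rw [hfx] at h1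
        rw [map_sum]
        have h2 := congrArg (fun x => (algebraMap _ (KK n) (b : MvPolynomial (Fin n) ℚ)) * x) h1
        simp only [mul_zero, mul_sum] at h2
        rw [← h2]
        apply sum_congr rfl
        intro j _
        rw [map_mul, hc j, Algebra.smul_def, row]
        ring
      have hc0 : c ≠ 0 := by
        intro h0
        apply hf0
        ext j
        have h1 := hc j
        rw [h0, Pi.zero_apply, map_zero, Algebra.smul_def] at h1
        have h2 := (mul_eq_zero.1 h1.symm).resolve_left (by
          intro h3
          exact nonZeroDivisors.coe_ne_zero b (IsFractionRing.to_map_eq_zero_iff.1 h3))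
        simpa using h2
      have hder : ∀ c, N c → ∀ i, N (fun j => pderiv i (c j)) := by
        intro c hNc t l
        have h1 : pderiv t (∑ j, c j * hasse (μ l) (φ j)) = 0 := by rw [hNc l, map_zero]
        rw [map_sum] at h1
        simp only [pderiv_mul, sum_add_distrib, pderiv_hasse] at h1
        have h2 := hNall c hNc (μ l + Finsupp.single t 1) (by
          have := hμ l
          simp only [Finsupp.add_apply, sum_add_distrib, Finsupp.single_apply, sum_ite_eq, mem_univ, if_true]
          omega)
        simp only [mul_smul_comm] at h1
        rw [← smul_sum, h2, smul_zero, add_zero] at h1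
        exact h1
      obtain ⟨a, ha0, haN⟩ := exists_const N hder
        (univ.sup fun j => (c j).support.sup fun ν => ∑ h, ν h) c hcN hc0 (by
          intro j ν hν
          exact (le_sup (f := fun ν : Fin n →₀ ℕ => ∑ h, ν h) hν).trans
            (le_sup (f := fun j => (c j).support.sup fun ν => ∑ h, ν h) (mem_univ j)))
      have h3 := hNall _ haN 0 (by simp)
      simp only [hasse_zero] at h3
      apply ha0
      funext j
      refine (Fintype.linearIndependent_iff.1 hφ) a ?_ j
      simpa [smul_eq_C_mul] using h3

lemma wronsk {k : ℕ} {φ : Fin k → MvPolynomial (Fin n) ℚ} (hφ : LinearIndependent ℚ φ) :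
    ∃ μ : Fin k → (Fin n →₀ ℕ), Function.Injective μ ∧ (∀ l, ∑ h, μ l h < k) ∧
      (Matrix.of fun l j => hasse (μ l) (φ j)).det ≠ 0 := by
  obtain ⟨μ, hμ, hli⟩ := wronsk_aux hφ k le_rfl
  refine ⟨μ, ?_, hμ, ?_⟩
  · intro a b hab
    apply hli.injective
    simp only [hab]
  · intro h0
    let M : Matrix (Fin k) (Fin k) (KK n) := (algebraMap _ (KK n)).mapMatrix (Matrix.of fun l j => hasse (μ l) (φ j))
    have h1 : IsUnit M := Matrix.linearIndependent_rows_iff_isUnit.1 hli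
    have h2 := (Matrix.isUnit_iff_isUnit_det _).1 h1
    have h3 : M.det = 0 := by
      rw [← RingHom.map_det, h0, map_zero]
    rw [h3] at h2
    exact not_isUnit_zero h2

end
end Roth


namespace Roth
open MvPolynomial Finset

noncomputable section

variable {n : ℕ}

def jn (b : Fin 1 →₀ ℕ) (a : Fin n →₀ ℕ) : Fin (n + 1) →₀ ℕ := Finsupp.cons (b 0) a

@[simp] lemma jn_zero (b : Fin 1 →₀ ℕ) (a : Fin n →₀ ℕ) : jn b a 0 = b 0 := Finsupp.cons_zero _ _
@[simp] lemma jn_succ (b : Fin 1 →₀ ℕ) (a : Fin n →₀ ℕ) (i : Fin n) : jn b a i.succ = a i :=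
  Finsupp.cons_succ _ _ _

lemma jn_add (b b' : Fin 1 →₀ ℕ) (a a' : Fin n →₀ ℕ) : jn b a + jn b' a' = jn (b + b') (a + a') := by
  ext i
  refine Fin.cases ?_ (fun i => ?_) i <;> simp

lemma jn_surj (κ : Fin (n + 1) →₀ ℕ) : ∃ b a, κ = jn b a :=
  ⟨Finsupp.single 0 (κ 0), Finsupp.tail κ, by
    ext i
    refine Fin.cases ?_ (fun i => ?_) i <;> simp [Finsupp.tail_apply]⟩

lemma jn_inj {b b' : Fin 1 →₀ ℕ} {a a' : Fin n →₀ ℕ} : jn b a = jn b' a' ↔ b = b' ∧ a = a' := by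
  constructor
  · intro h
    constructor
    · refine Finsupp.ext fun i => ?_
      have := DFunLike.congr_fun h 0
      rw [Subsingleton.elim i 0]
      simpa using this
    · ext i
      simpa using DFunLike.congr_fun h i.succ
  · rintro ⟨rfl, rfl⟩; rfl

lemma bin_jn (b b' : Fin 1 →₀ ℕ) (a a' : Fin n →₀ ℕ) : bin (jn b a) (jn b' a') = bin b b' * bin a a' := by
  simp [bin, Fin.prod_univ_succ]

def sep (φ : MvPolynomial (Fin n) ℚ) (ψ : MvPolynomial (Fin 1) ℚ) : MvPolynomial (Fin (n + 1)) ℚ :=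
  rename Fin.succ φ * rename (fun _ => 0) ψ

lemma sep_monomial (a : Fin n →₀ ℕ) (b : Fin 1 →₀ ℕ) (c d : ℚ) :
    sep (monomial a c) (monomial b d) = monomial (jn b a) (c * d) := by
  rw [sep, rename_monomial, rename_monomial, monomial_mul]
  refine congrArg (fun t => monomial t (c * d)) ?_
  refine Finsupp.ext fun i => ?_
  refine Fin.cases ?_ (fun i => ?_) i
  · rw [Finsupp.add_apply, Finsupp.mapDomain_of_notMem_range, jn_zero, zero_add]
    · have : (fun _ : Fin 1 => (0 : Fin (n+1))) = fun x => Fin.castLE (by omega) x := by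
        funext x; rw [Subsingleton.elim x 0]; rfl
      have h2 := Finsupp.mapDomain_apply (f := fun _ : Fin 1 => (0 : Fin (n+1)))
        (fun x y _ => Subsingleton.elim x y) b 0
      exact h2
    · rintro ⟨x, hx⟩
      exact Fin.succ_ne_zero x hx
  · rw [Finsupp.add_apply, Finsupp.mapDomain_apply (Fin.succ_injective n), Finsupp.mapDomain_of_notMem_range,
      jn_succ, add_zero]
    rintro ⟨x, hx⟩
    exact Fin.succ_ne_zero i hx.symm

lemma sep_add_left (φ φ' : MvPolynomial (Fin n) ℚ) (ψ : MvPolynomial (Fin 1) ℚ) :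
    sep (φ + φ') ψ = sep φ ψ + sep φ' ψ := by simp [sep, add_mul]

lemma sep_add_right (φ : MvPolynomial (Fin n) ℚ) (ψ ψ' : MvPolynomial (Fin 1) ℚ) :
    sep φ (ψ + ψ') = sep φ ψ + sep φ ψ' := by simp [sep, mul_add]

lemma sep_smul_left (c : ℚ) (φ : MvPolynomial (Fin n) ℚ) (ψ : MvPolynomial (Fin 1) ℚ) :
    sep (c • φ) ψ = c • sep φ ψ := by simp [sep]

lemma sep_smul_right (c : ℚ) (φ : MvPolynomial (Fin n) ℚ) (ψ : MvPolynomial (Fin 1) ℚ) :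
    sep φ (c • ψ) = c • sep φ ψ := by simp [sep]

lemma sep_sum_left {ι : Type*} (s : Finset ι) (φ : ι → MvPolynomial (Fin n) ℚ) (ψ : MvPolynomial (Fin 1) ℚ) :
    sep (∑ i ∈ s, φ i) ψ = ∑ i ∈ s, sep (φ i) ψ := by simp [sep, sum_mul]

lemma sep_sum_right {ι : Type*} (s : Finset ι) (φ : MvPolynomial (Fin n) ℚ) (ψ : ι → MvPolynomial (Fin 1) ℚ) :
    sep φ (∑ i ∈ s, ψ i) = ∑ i ∈ s, sep φ (ψ i) := by simp [sep, mul_sum]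

lemma coeff_sep (φ : MvPolynomial (Fin n) ℚ) (ψ : MvPolynomial (Fin 1) ℚ) (b : Fin 1 →₀ ℕ) (a : Fin n →₀ ℕ) :
    coeff (jn b a) (sep φ ψ) = coeff a φ * coeff b ψ := by
  induction φ using MvPolynomial.induction_on' with
  | add p q hp hq => rw [sep_add_left, coeff_add, hp, hq, coeff_add, add_mul]
  | monomial u c =>
    induction ψ using MvPolynomial.induction_on' with
    | add p q hp hq => rw [sep_add_right, coeff_add, hp, hq, coeff_add, mul_add]
    | monomial v d =>
      rw [sep_monomial, coeff_monomial, coeff_monomial, coeff_monomial]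
      simp only [jn_inj]
      split_ifs <;> simp_all

lemma tr_sep (x : Fin (n + 1) → ℚ) (φ : MvPolynomial (Fin n) ℚ) (ψ : MvPolynomial (Fin 1) ℚ) :
    tr x (sep φ ψ) = sep (tr (fun i => x i.succ) φ) (tr (fun _ => x 0) ψ) := by
  have h1 : (tr x).comp (rename Fin.succ) = (rename Fin.succ).comp (tr (fun i : Fin n => x i.succ)) := by
    apply algHom_ext
    intro i
    simp [tr]
  have h2 : (tr x).comp (rename (fun _ : Fin 1 => (0 : Fin (n+1)))) = (rename (fun _ => 0)).comp (tr (fun _ => x 0)) := by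
    apply algHom_ext
    intro i
    simp [tr]
  rw [sep, map_mul, sep]
  congr 1
  · exact DFunLike.congr_fun h1 φ
  · exact DFunLike.congr_fun h2 ψ

lemma hasse_sep {k : ℕ} (φ : Fin k → MvPolynomial (Fin n) ℚ) (ψ : Fin k → MvPolynomial (Fin 1) ℚ)
    (ν : Fin 1 →₀ ℕ) (μ : Fin n →₀ ℕ) :
    hasse (jn ν μ) (∑ j, sep (φ j) (ψ j)) = ∑ j, sep (hasse μ (φ j)) (hasse ν (ψ j)) := by
  ext κ
  obtain ⟨b, a, rfl⟩ := jn_surj κ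
  rw [coeff_hasse, jn_add, bin_jn, coeff_sum, coeff_sum, sum_mul]
  apply sum_congr rfl
  intro j _
  rw [coeff_sep, coeff_sep, coeff_hasse, coeff_hasse]
  push_cast
  ring

lemma decomp {r : ℕ} {P : MvPolynomial (Fin (n + 1)) ℚ} (hP : P ≠ 0) (hr : ∀ ν ∈ P.support, ν 0 ≤ r) :
    ∃ k, 0 < k ∧ k ≤ r + 1 ∧ ∃ (φ : Fin k → MvPolynomial (Fin n) ℚ) (ψ : Fin k → MvPolynomial (Fin 1) ℚ),
      LinearIndependent ℚ φ ∧ LinearIndependent ℚ ψ ∧ P = ∑ j, sep (φ j) (ψ j) := by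
  classical
  have hex0 : ∃ (φ : Fin (r + 1) → MvPolynomial (Fin n) ℚ) (ψ : Fin (r + 1) → MvPolynomial (Fin 1) ℚ),
      P = ∑ j, sep (φ j) (ψ j) := by
    refine ⟨fun j => (finSuccEquiv ℚ n P).coeff j, fun j => monomial (Finsupp.single 0 (j : ℕ)) 1, ?_⟩
    ext κ
    obtain ⟨b, a, rfl⟩ := jn_surj κ
    rw [coeff_sum]
    simp only [coeff_sep, finSuccEquiv_coeff_coeff, coeff_monomial]
    have hb : b = Finsupp.single 0 (b 0) := by
      refine Finsupp.ext fun i => ?_; rw [Subsingleton.elim i 0]; simp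
    by_cases hbr : b 0 < r + 1
    · rw [sum_eq_single ⟨b 0, hbr⟩]
      · simp [← hb, jn]
      · intro j _ hj
        rw [if_neg, mul_zero]
        intro h
        apply hj
        apply Fin.ext
        have := DFunLike.congr_fun h 0
        simpa using this
      · simp
    · rw [sum_eq_zero]
      · by_contra h
        have := hr _ (mem_support_iff.2 h)
        simp at this
        omega
      · intro j _
        rw [if_neg, mul_zero]
        intro h
        have := DFunLike.congr_fun h 0
        simp at this
        omega
  have hex : ∃ k, ∃ (φ : Fin k → MvPolynomial (Fin n) ℚ) (ψ : Fin k → MvPolynomial (Fin 1) ℚ),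
      P = ∑ j, sep (φ j) (ψ j) := ⟨r + 1, hex0⟩
  have hle : Nat.find hex ≤ r + 1 := Nat.find_min' _ hex0
  obtain ⟨φ, ψ, hφψ⟩ := Nat.find_spec hex
  have hmin := fun m => Nat.find_min hex (m := m)
  generalize Nat.find hex = k at *
  have hk : 0 < k := by
    rcases Nat.eq_zero_or_pos k with rfl | h
    · simp at hφψ
      exact absurd hφψ hP
    · exact h
  refine ⟨k, hk, hle, φ, ψ, ?_, ?_, hφψ⟩
  · by_contra hli
    rw [Fintype.not_linearIndependent_iff] at hli
    obtain ⟨g, hg, i, hi⟩ := hli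
    obtain ⟨k, rfl⟩ : ∃ k', k = k' + 1 := ⟨k - 1, by omega⟩
    apply hmin k (by omega)
    refine ⟨fun l => φ (i.succAbove l), fun l => ψ (i.succAbove l) + (- g (i.succAbove l) / g i) • ψ i, ?_⟩
    rw [Fin.sum_univ_succAbove _ i] at hg hφψ
    have h1 : φ i = ∑ l, (- g (i.succAbove l) / g i) • φ (i.succAbove l) := by
      have h2 : g i • φ i = - ∑ l, g (i.succAbove l) • φ (i.succAbove l) := eq_neg_of_add_eq_zero_left hg
      have h3 : φ i = (g i)⁻¹ • (g i • φ i) := by rw [smul_smul, inv_mul_cancel₀ hi, one_smul]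
      rw [h3, h2, ← sum_neg_distrib, smul_sum]
      apply sum_congr rfl
      intro l _
      rw [← neg_smul, smul_smul]
      congr 1
      field_simp
    rw [hφψ]
    conv_lhs => rw [h1]
    rw [sep_sum_left, ← sum_add_distrib]
    apply sum_congr rfl
    intro l _
    rw [sep_add_right, sep_smul_left, sep_smul_right]
    exact add_comm _ _
  · by_contra hli
    rw [Fintype.not_linearIndependent_iff] at hli
    obtain ⟨g, hg, i, hi⟩ := hli
    obtain ⟨k, rfl⟩ : ∃ k', k = k' + 1 := ⟨k - 1, by omega⟩
    apply hmin k (by omega)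
    refine ⟨fun l => φ (i.succAbove l) + (- g (i.succAbove l) / g i) • φ i, fun l => ψ (i.succAbove l), ?_⟩
    rw [Fin.sum_univ_succAbove _ i] at hg hφψ
    have h1 : ψ i = ∑ l, (- g (i.succAbove l) / g i) • ψ (i.succAbove l) := by
      have h2 : g i • ψ i = - ∑ l, g (i.succAbove l) • ψ (i.succAbove l) := eq_neg_of_add_eq_zero_left hg
      have h3 : ψ i = (g i)⁻¹ • (g i • ψ i) := by rw [smul_smul, inv_mul_cancel₀ hi, one_smul]
      rw [h3, h2, ← sum_neg_distrib, smul_sum]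
      apply sum_congr rfl
      intro l _
      rw [← neg_smul, smul_smul]
      congr 1
      field_simp
    rw [hφψ]
    conv_lhs => rw [h1]
    rw [sep_sum_right, ← sum_add_distrib]
    apply sum_congr rfl
    intro l _
    rw [sep_add_left, sep_smul_left, sep_smul_right]
    exact add_comm _ _

lemma isPrimitive_lin (x : ℚ) : (Polynomial.C (x.den : ℤ) * Polynomial.X - Polynomial.C x.num).IsPrimitive := by
  rw [Polynomial.isPrimitive_iff_isUnit_of_C_dvd]
  intro r hr
  rw [Polynomial.C_dvd_iff_dvd_coeff] at hr
  have h0 := hr 0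
  have h1 := hr 1
  have e0 : (Polynomial.C (x.den : ℤ) * Polynomial.X - Polynomial.C x.num).coeff 0 = - x.num := by
    rw [Polynomial.coeff_sub, Polynomial.coeff_C_mul, Polynomial.coeff_C]; simp
  have e1 : (Polynomial.C (x.den : ℤ) * Polynomial.X - Polynomial.C x.num).coeff 1 = (x.den : ℤ) := by
    rw [Polynomial.coeff_sub, Polynomial.coeff_C_mul, Polynomial.coeff_C]; simp
  rw [e0, dvd_neg] at h0
  rw [e1] at h1
  have hc : IsCoprime x.num (x.den : ℤ) := Rat.isCoprime_num_den x
  exact hc.isUnit_of_dvd' h0 h1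

lemma gauss {U : MvPolynomial (Fin 1) ℚ} (hU : U ≠ 0) (hint : IsInt U) (x : ℚ) (j : ℕ)
    (hj : ∀ ν ∈ (tr (fun _ => x) U).support, j ≤ ν 0) : (x.den : ℝ) ^ j ≤ nrm U := by
  classical
  obtain ⟨g, rfl⟩ := (isInt_iff U).1 hint
  let e : ∀ (S : Type) [CommRing S], MvPolynomial (Fin 1) S →ₐ[S] Polynomial S :=
    fun S _ => aeval (fun _ => Polynomial.X)
  have hcoef : ∀ (f : MvPolynomial (Fin 1) ℤ) (i : ℕ), (e ℤ f).coeff i = coeff (Finsupp.single 0 i) f := by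
    intro f i
    induction f using MvPolynomial.induction_on' with
    | add p q hp hq => rw [map_add, Polynomial.coeff_add, hp, hq, coeff_add]
    | monomial u c =>
      simp only [e, aeval_monomial, coeff_monomial]
      rw [Finsupp.prod_fintype _ _ (by simp)]
      simp only [univ_unique, Fin.default_eq_zero, Fin.isValue, prod_singleton]
      rw [Polynomial.algebraMap_eq, Polynomial.coeff_C_mul_X_pow]
      congr 1
      rw [eq_iff_iff]
      constructor
      · rintro rfl
        refine Finsupp.ext fun i => ?_; rw [Subsingleton.elim i 0]; simp
      · rintro rfl; simp
  set G := e ℤ g with hG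
  have hg0 : g ≠ 0 := by rintro rfl; simp at hU
  have hG0 : G ≠ 0 := by
    intro h0
    apply hg0
    ext ν
    have : ν = Finsupp.single 0 (ν 0) := by refine Finsupp.ext fun i => ?_; rw [Subsingleton.elim i 0]; simp
    rw [this, ← hcoef, ← hG, h0]; simp
  -- divisibility
  have hd1 : (X 0 : MvPolynomial (Fin 1) ℚ) ^ j ∣ tr (fun _ => x) (map (Int.castRingHom ℚ) g) := by
    rw [as_sum (tr (fun _ => x) (map (Int.castRingHom ℚ) g))]
    apply dvd_sum
    intro ν hν
    rw [X_pow_eq_monomial, monomial_dvd_monomial]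
    refine ⟨Or.inr ?_, one_dvd _⟩
    rw [Finsupp.single_le_iff]
    exact hj ν hν
  have hd2 : (X 0 - C x : MvPolynomial (Fin 1) ℚ) ^ j ∣ (map (Int.castRingHom ℚ) g) := by
    have h := map_dvd (tr (fun _ => -x)) hd1
    rw [tr_tr] at h
    simp only [neg_add_cancel, tr_zero] at h
    convert h using 1
    simp [tr, sub_eq_add_neg]
  have hd3 : (Polynomial.X - Polynomial.C x : Polynomial ℚ) ^ j ∣ G.map (Int.castRingHom ℚ) := by
    have h := map_dvd (e ℚ) hd2
    convert h using 1
    · simp [e]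
    · rw [hG]
      have : ((Polynomial.mapRingHom (Int.castRingHom ℚ)).comp (e ℤ).toRingHom) =
        (e ℚ).toRingHom.comp (map (Int.castRingHom ℚ)) := by
        apply MvPolynomial.ringHom_ext
        · intro r; simp
        · intro i; simp [e]
      exact DFunLike.congr_fun this g
  have hd4 : (Polynomial.C (x.den : ℤ) * Polynomial.X - Polynomial.C x.num) ^ j ∣ G := by
    have hpr : ∀ j : ℕ, ((Polynomial.C (x.den : ℤ) * Polynomial.X - Polynomial.C x.num) ^ j).IsPrimitive := by
      intro j
      induction j with
      | zero => simp [Polynomial.isPrimitive_one]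
      | succ j ih => rw [pow_succ]; exact ih.mul (isPrimitive_lin x)
    rw [Polynomial.IsPrimitive.Int.dvd_iff_map_cast_dvd_map_cast _ _ (hpr j)]
    have h6 : ((Polynomial.C (x.den : ℤ) * Polynomial.X - Polynomial.C x.num) ^ j).map (Int.castRingHom ℚ) =
        Polynomial.C ((x.den : ℚ) ^ j) * (Polynomial.X - Polynomial.C x) ^ j := by
      rw [Polynomial.C_pow, ← mul_pow, Polynomial.map_pow, mul_sub, ← Polynomial.C_mul]
      rw [mul_comm (x.den : ℚ) x, Rat.mul_den_eq_num, Polynomial.map_sub, Polynomial.map_mul, Polynomial.map_C,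
        Polynomial.map_C, Polynomial.map_X]
      rfl
    rw [h6]
    refine (IsUnit.mul_left_dvd ?_).2 hd3
    rw [Polynomial.isUnit_C, isUnit_iff_ne_zero]
    have := x.den_ne_zero
    positivity
  have hlc := Polynomial.leadingCoeff_dvd_leadingCoeff hd4
  have hlin : (Polynomial.C (x.den : ℤ) * Polynomial.X - Polynomial.C x.num).leadingCoeff = (x.den : ℤ) := by
    have := Polynomial.leadingCoeff_linear (a := (x.den : ℤ)) (b := - x.num) (by exact_mod_cast x.den_ne_zero)
    rwa [Polynomial.C_neg, ← sub_eq_add_neg] at this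
  rw [Polynomial.leadingCoeff_pow, hlin] at hlc
  have hle := Int.le_of_dvd (abs_pos.2 (Polynomial.leadingCoeff_ne_zero.2 hG0)) ((dvd_abs _ _).2 hlc)
  have hle' : (x.den : ℝ) ^ j ≤ |(G.leadingCoeff : ℝ)| := by exact_mod_cast hle
  refine hle'.trans ?_
  rw [Polynomial.leadingCoeff, hcoef]
  set ν : Fin 1 →₀ ℕ := Finsupp.single 0 G.natDegree
  have h5 : |((coeff ν (map (Int.castRingHom ℚ) g) : ℚ) : ℝ)| ≤ nrm (map (Int.castRingHom ℚ) g) := by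
    rw [nrm_eq (s := (map (Int.castRingHom ℚ) g).support ∪ {ν}) subset_union_left]
    exact single_le_sum (f := fun ν => |((coeff ν (map (Int.castRingHom ℚ) g) : ℚ) : ℝ)|) (fun _ _ => abs_nonneg _) (by simp)
  simpa [coeff_map] using h5

end
end Roth


namespace Roth
open MvPolynomial Finset

noncomputable section

variable {n : ℕ}

lemma wpack {r : ℕ} {P : MvPolynomial (Fin (n + 1)) ℚ} (hP : P ≠ 0) (hr : ∀ ν ∈ P.support, ν 0 ≤ r) :
    ∃ k, 0 < k ∧ k ≤ r + 1 ∧ ∃ (μ : Fin k → (Fin n →₀ ℕ)) (ν : Fin k → (Fin 1 →₀ ℕ)),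
      Function.Injective (fun l => ν l 0) ∧ (∀ l, ∑ h, μ l h < k) ∧ (∀ l, ν l 0 < k) ∧
      ∃ V U, V ≠ 0 ∧ U ≠ 0 ∧ (Matrix.of fun i l => hasse (jn (ν l) (μ i)) P).det = sep V U := by
  obtain ⟨k, hk, hkr, φ, ψ, hφ, hψ, rfl⟩ := decomp hP hr
  obtain ⟨μ, -, hμ, hV⟩ := wronsk hφ
  obtain ⟨ν, hνi, hν, hU⟩ := wronsk hψ
  refine ⟨k, hk, hkr, μ, ν, ?_, hμ, ?_, _, _, hV, hU, ?_⟩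
  · intro l l' h
    apply hνi
    refine Finsupp.ext fun i => ?_
    rw [Subsingleton.elim i 0]; exact h
  · intro l
    simpa using hν l
  · rw [sep, AlgHom.map_det, AlgHom.map_det, ← Matrix.det_transpose (AlgHom.mapMatrix (rename fun _ => (0 : Fin (n+1))) _),
      ← Matrix.det_mul]
    congr 1
    ext1 i l
    rw [Matrix.of_apply, hasse_sep, Matrix.mul_apply]
    rfl

lemma sumlow {k r : ℕ} (hk : 0 < k) (hkr : k ≤ r + 1) (hr : 0 < r) {c : ℝ} (hc : 0 < c) (hc1 : c ≤ 1)
    (f : Fin k → ℕ) (hf : Function.Injective f) (hlt : ∀ l, f l < k) :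
    k * c ^ 2 / 8 ≤ ∑ l, max 0 (c - f l / r) := by
  classical
  have h1 : ∑ l, max 0 (c - f l / r) = ∑ v ∈ range k, max 0 (c - (v : ℝ) / r) := by
    have : univ.image f = range k := by
      apply eq_of_subset_of_card_le
      · intro v hv
        simp only [mem_image, mem_univ, true_and] at hv
        obtain ⟨l, rfl⟩ := hv
        simpa using hlt l
      · rw [card_image_of_injective _ hf]; simp
    rw [← this, sum_image (fun a _ b _ h => hf h)]
  rw [h1]
  have hr' : (0 : ℝ) < r := by exact_mod_cast hr
  have hkr' : (k : ℝ) ≤ 2 * r := by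
    have : k ≤ 2 * r := by omega
    exact_mod_cast this
  set K := min k (⌊c * r / 2⌋₊ + 1) with hK
  have h2 : ∑ v ∈ range K, c / 2 ≤ ∑ v ∈ range k, max 0 (c - (v : ℝ) / r) := by
    refine le_trans (sum_le_sum ?_) (sum_le_sum_of_subset_of_nonneg (range_subset_range.2 (min_le_left _ _)) (fun _ _ _ => le_max_left _ _))
    intro v hv
    apply le_max_of_le_right
    have hv1 : v < ⌊c * r / 2⌋₊ + 1 := lt_of_lt_of_le (mem_range.1 hv) (min_le_right _ _)
    have hv2 : (v : ℝ) ≤ c * r / 2 := (Nat.le_floor_iff (by positivity)).1 (Nat.lt_succ_iff.1 hv1)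
    have : (v : ℝ) / r ≤ c / 2 := by rw [div_le_iff₀ hr']; linarith
    linarith
  refine le_trans ?_ h2
  rw [sum_const, card_range, nsmul_eq_mul]
  have h3 : (k : ℝ) * c / 4 ≤ K := by
    rw [hK, Nat.cast_min, le_min_iff]
    have hk' : (0 : ℝ) < k := by exact_mod_cast hk
    constructor
    · nlinarith
    · have := (Nat.lt_floor_add_one (c * r / 2)).le
      push_cast
      nlinarith
  nlinarith

def RL (n : ℕ) : Prop := ∀ η : ℝ, 0 < η → ∃ σ : ℝ, 0 < σ ∧ ∀ (r : Fin n → ℕ) (ξ : Fin n → ℚ) (L : ℝ)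
  (P : MvPolynomial (Fin n) ℚ), 0 < L → (∀ h, 0 < r h) → (∀ i j, i < j → (r i : ℝ) ≤ σ * r j) →
  (∀ h, L ≤ r h * Real.log (ξ h).den) → (∀ h, (r h : ℝ) ≤ σ * L) → P ≠ 0 → IsInt P → DegLE r P →
  nrm P ≤ Real.exp (σ * L) → ∃ μ ∈ (tr ξ P).support, ∑ h, (1 / (r h : ℝ)) * μ h < η

lemma nrm_pick {V : MvPolynomial (Fin n) ℚ} {U : MvPolynomial (Fin 1) ℚ} (b : Fin 1 →₀ ℕ) :
    nrm (coeff b U • V) ≤ nrm (sep V U) := by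
  classical
  have hinj : Function.Injective (fun a : Fin n →₀ ℕ => jn b a) := fun a a' h => (jn_inj.1 h).2
  rw [nrm, nrm]
  have : ∑ ν ∈ (coeff b U • V).support, |((coeff ν (coeff b U • V) : ℚ) : ℝ)| =
      ∑ ν ∈ (coeff b U • V).support.image (fun a => jn b a), |((coeff ν (sep V U) : ℚ) : ℝ)| := by
    rw [sum_image (fun a _ a' _ h => hinj h)]
    apply sum_congr rfl
    intro a _
    rw [coeff_sep, coeff_smul, smul_eq_mul, mul_comm]
  rw [this]
  apply sum_le_sum_of_subset_of_nonneg
  · intro ν hν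
    obtain ⟨a, ha, rfl⟩ := mem_image.1 hν
    rw [mem_support_iff] at ha ⊢
    rwa [coeff_sep, mul_comm, ← smul_eq_mul, ← coeff_smul]
  · intros; positivity

lemma nrm_pick' {V : MvPolynomial (Fin n) ℚ} {U : MvPolynomial (Fin 1) ℚ} (a : Fin n →₀ ℕ) :
    nrm (coeff a V • U) ≤ nrm (sep V U) := by
  classical
  have hinj : Function.Injective (fun b : Fin 1 →₀ ℕ => jn b a) := fun a a' h => (jn_inj.1 h).1
  rw [nrm, nrm]
  have : ∑ ν ∈ (coeff a V • U).support, |((coeff ν (coeff a V • U) : ℚ) : ℝ)| =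
      ∑ ν ∈ (coeff a V • U).support.image (fun b => jn b a), |((coeff ν (sep V U) : ℚ) : ℝ)| := by
    rw [sum_image (fun a _ a' _ h => hinj h)]
    apply sum_congr rfl
    intro b _
    rw [coeff_sep, coeff_smul, smul_eq_mul]
  rw [this]
  apply sum_le_sum_of_subset_of_nonneg
  · intro ν hν
    obtain ⟨b, hb, rfl⟩ := mem_image.1 hν
    rw [mem_support_iff] at hb ⊢
    rwa [coeff_sep, ← smul_eq_mul, ← coeff_smul]
  · intros; positivity

lemma RL_zero : RL 0 := by
  intro η hη
  refine ⟨1, one_pos, ?_⟩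
  intro r ξ L P _ _ _ _ _ hP _ _ _
  obtain ⟨μ, hμ⟩ := Finset.nonempty_iff_ne_empty.2 (fun h => tr_ne_zero ξ hP (support_eq_empty.1 h))
  exact ⟨μ, hμ, by simpa using hη⟩

lemma RL_succ (ih : RL n) : RL (n + 1) := by
  classical
  intro η0 hη0
  set η := min η0 1 with hηdef
  have hη : 0 < η := lt_min hη0 one_pos
  have hη1 : η ≤ 1 := min_le_right _ _
  obtain ⟨σ', hσ', ih⟩ := ih (η ^ 2 / 128) (by positivity)
  have hn : (0 : ℝ) < n + 3 := by positivity
  set σ := min (σ' / (n + 3)) (η ^ 2 / 128 / (n + 3)) with hσdef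
  have hσ : 0 < σ := lt_min (by positivity) (by positivity)
  have hσ1 : (n + 3) * σ ≤ σ' := by
    have := min_le_left (σ' / (n + 3)) (η ^ 2 / 128 / (n + 3))
    rw [← hσdef, le_div_iff₀ hn] at this; linarith
  have hσ2 : (n + 3) * σ ≤ η ^ 2 / 128 := by
    have := min_le_right (σ' / (n + 3)) (η ^ 2 / 128 / (n + 3))
    rw [← hσdef, le_div_iff₀ hn] at this; linarith
  have hn0 : (0 : ℝ) ≤ n := by positivity
  have hσσ' : σ ≤ σ' := by nlinarith
  have hση : σ ≤ η / 2 := by nlinarith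
  refine ⟨σ, hσ, ?_⟩
  intro r ξ L P hL hr hrr hLr hrL hP hPi hPd hPn
  by_contra hcon
  push Not at hcon
  have hInd : Ind (fun h => 1 / (r h : ℝ)) η (tr ξ P) := fun μ hμ => (min_le_left _ _).trans (hcon μ hμ)
  obtain ⟨k, hk, hkr, μ, ν, hνi, hμ, hν, V, U, hV, hU, hW⟩ := wpack hP (fun ν hν => hPd ν hν 0)
  set M := (Matrix.of fun i l => hasse (jn (ν l) (μ i)) P) with hM
  have hk' : (0 : ℝ) < k := by exact_mod_cast hk
  have hr0 : (0 : ℝ) < r 0 := by exact_mod_cast hr 0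
  have hkr' : (k : ℝ) ≤ r 0 + 1 := by exact_mod_cast hkr
  have hWi : IsInt (sep V U) := by
    rw [← hW]; exact IsInt.det (fun i l => hPi.hasse _)
  have hWd : DegLE (k • r) (sep V U) := by
    rw [← hW]; exact DegLE.det (fun i l => hPd.hasse _)
  have hWn : nrm (sep V U) ≤ Real.exp (k * ((n + 3) * σ * L)) := by
    rw [← hW]
    have h1 : (2 : ℝ) ^ (∑ h, r h) ≤ Real.exp ((n + 1) * σ * L) := by
      have h2 : (2 : ℝ) ≤ Real.exp 1 := by
        have := Real.add_one_le_exp (1 : ℝ); linarith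
      calc (2 : ℝ) ^ (∑ h, r h) ≤ (Real.exp 1) ^ (∑ h, r h) := by gcongr
        _ = Real.exp (∑ h, (r h : ℝ)) := by rw [← Real.exp_nat_mul]; push_cast; rw [mul_one]
        _ ≤ _ := by
          apply Real.exp_le_exp.2
          refine (sum_le_sum (fun h _ => hrL h)).trans ?_
          simp; linarith
    have h3 : ∀ i l, nrm (M i l) ≤ Real.exp ((n + 2) * σ * L) := by
      intro i l
      refine (nrm_hasse hPd _).trans ?_
      calc _ ≤ Real.exp ((n + 1) * σ * L) * Real.exp (σ * L) := by
            have := nrm_nonneg P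
            gcongr
        _ = _ := by rw [← Real.exp_add]; congr 1; ring
    refine (nrm_det h3).trans ?_
    have h4 : (k.factorial : ℝ) ≤ Real.exp (σ * L) ^ k := by
      calc (k.factorial : ℝ) ≤ (k : ℝ) ^ k := by exact_mod_cast Nat.factorial_le_pow k
        _ ≤ _ := by
          gcongr
          have := Real.add_one_le_exp (r 0 : ℝ)
          refine (hkr'.trans this).trans (Real.exp_le_exp.2 (hrL 0))
    calc _ ≤ Real.exp (σ * L) ^ k * Real.exp ((n + 2) * σ * L) ^ k := by gcongr
      _ = _ := by
        rw [← mul_pow, ← Real.exp_add, ← Real.exp_nat_mul]; congr 1; ring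
  obtain ⟨b0, hb0⟩ := (ne_zero_iff).1 hU
  obtain ⟨a0, ha0⟩ := (ne_zero_iff).1 hV
  -- apply the induction hypothesis
  obtain ⟨μ', hμ', hμ'lt⟩ := ih (fun h => k * r h.succ) (fun h => ξ h.succ) (k * L) (coeff b0 U • V)
    (by positivity) (fun h => Nat.mul_pos hk (hr _))
    (by
      intro i j hij
      have := hrr i.succ j.succ (Fin.succ_lt_succ_iff.2 hij)
      have hj : (0 : ℝ) ≤ r j.succ := by positivity
      push_cast
      have h2 : (r i.succ : ℝ) ≤ σ' * r j.succ := this.trans (by gcongr)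
      calc (k : ℝ) * r i.succ ≤ k * (σ' * r j.succ) := by gcongr
        _ = _ := by ring)
    (by
      intro h
      push_cast
      rw [mul_assoc]
      exact mul_le_mul_of_nonneg_left (hLr _) hk'.le)
    (by
      intro h
      push_cast
      have h2 : (r h.succ : ℝ) ≤ σ' * L := (hrL _).trans (by gcongr)
      calc (k : ℝ) * r h.succ ≤ k * (σ' * L) := by gcongr
        _ = _ := by ring)
    (smul_ne_zero hb0 hV)
    (by
      intro a
      obtain ⟨z, hz⟩ := hWi (jn b0 a)
      exact ⟨z, by rw [← hz, coeff_sep, coeff_smul, smul_eq_mul, mul_comm]⟩)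
    (by
      intro a ha h
      have : jn b0 a ∈ (sep V U).support := by
        rw [mem_support_iff] at ha ⊢
        rwa [coeff_sep, mul_comm, ← smul_eq_mul, ← coeff_smul]
      simpa using hWd _ this h.succ)
    (by
      refine (nrm_pick b0).trans (hWn.trans (Real.exp_le_exp.2 ?_))
      calc (k : ℝ) * ((n + 3) * σ * L) ≤ k * (σ' * L) := by gcongr
        _ = _ := by ring)
  have hμ'' : coeff μ' (tr (fun h => ξ h.succ) V) ≠ 0 := by
    rw [mem_support_iff, map_smul, coeff_smul] at hμ'
    exact right_ne_zero_of_mul hμ'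
  have hμ'2 : ∑ h, (1 / (r h.succ : ℝ)) * μ' h < k * (η ^ 2 / 128) := by
    have : ∑ h, (1 / (r h.succ : ℝ)) * μ' h = k * ∑ h, (1 / ((k * r h.succ : ℕ) : ℝ)) * μ' h := by
      rw [mul_sum]
      apply sum_congr rfl
      intro h _
      push_cast
      have := hr h.succ
      field_simp
    rw [this]
    gcongr
  -- one variable part
  have hU'' : coeff a0 V • U ≠ 0 := smul_ne_zero ha0 hU
  obtain ⟨ν', hν', hmin⟩ := exists_min_image (tr (fun _ => ξ 0) (coeff a0 V • U)).support (fun ν => ν 0)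
    (Finset.nonempty_iff_ne_empty.2 (fun h => tr_ne_zero _ hU'' (support_eq_empty.1 h)))
  have hg := gauss hU'' (by
      intro b
      obtain ⟨z, hz⟩ := hWi (jn b a0)
      exact ⟨z, by rw [← hz, coeff_sep, coeff_smul, smul_eq_mul]⟩) (ξ 0) (ν' 0) hmin
  have hν'' : coeff ν' (tr (fun _ => ξ 0) U) ≠ 0 := by
    rw [mem_support_iff, map_smul, coeff_smul] at hν'
    exact right_ne_zero_of_mul hν'
  have hν'2 : (1 / (r 0 : ℝ)) * ν' 0 ≤ k * (η ^ 2 / 128) := by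
    have h1 := hg.trans ((nrm_pick' a0).trans hWn)
    have hd : (0 : ℝ) < (ξ 0).den := by exact_mod_cast (ξ 0).den_pos
    have h2 := Real.log_le_log (by positivity) h1
    rw [Real.log_pow, Real.log_exp] at h2
    have h3 := hLr 0
    have hlog : 0 < Real.log (ξ 0).den := by
      by_contra h
      push Not at h
      have := mul_nonpos_of_nonneg_of_nonpos hr0.le h
      linarith
    have h4 : (ν' 0 : ℝ) * Real.log (ξ 0).den ≤ (k * (η ^ 2 / 128) * r 0) * Real.log (ξ 0).den := by
      calc _ ≤ (k : ℝ) * ((n + 3) * σ * L) := h2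
        _ ≤ k * ((η ^ 2 / 128) * (r 0 * Real.log (ξ 0).den)) := by gcongr
        _ = _ := by ring
    have h5 := le_of_mul_le_mul_right h4 hlog
    rw [one_div, inv_mul_le_iff₀ hr0]
    linarith
  have hmem : jn ν' μ' ∈ (tr ξ (sep V U)).support := by
    rw [mem_support_iff, tr_sep, coeff_sep]
    exact mul_ne_zero hμ'' hν''
  have hlow : Ind (fun h => 1 / (r h : ℝ)) (∑ l, max 0 (η / 2 - ν l 0 / r 0)) (tr ξ (sep V U)) := by
    rw [← hW, AlgHom.map_det]
    apply Ind.det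
    intro i l
    have he : (AlgHom.mapMatrix (tr ξ) M) i l = hasse (jn (ν l) (μ i)) (tr ξ P) := by
      rw [hasse_tr ξ P _ _ rfl]; rfl
    rw [he]
    have h1 := hInd.hasse (jn (ν l) (μ i))
    have h2 : ∑ h, 1 / (r h : ℝ) * (jn (ν l) (μ i)) h ≤ ν l 0 / r 0 + σ := by
      rw [Fin.sum_univ_succ]
      simp only [jn_zero, jn_succ]
      have h3 : ∑ h : Fin n, 1 / (r h.succ : ℝ) * (μ i) h ≤ ∑ h : Fin n, σ / r 0 * (μ i) h := by
        apply sum_le_sum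
        intro h _
        refine mul_le_mul_of_nonneg_right ?_ (Nat.cast_nonneg _)
        have hrs : (0 : ℝ) < r h.succ := by exact_mod_cast hr _
        rw [div_le_div_iff₀ hrs hr0]
        have := hrr 0 h.succ (Fin.succ_pos h)
        linarith
      have h4 : ∑ h : Fin n, σ / r 0 * (μ i) h ≤ σ := by
        rw [← mul_sum]
        have h5 : (∑ h, μ i h) ≤ r 0 := by have := hμ i; omega
        have h6 : ∑ h, ((μ i) h : ℝ) ≤ r 0 := by exact_mod_cast h5
        calc _ ≤ σ / r 0 * r 0 := by gcongr
          _ = σ := by field_simp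
      have h7 : 1 / (r 0 : ℝ) * ν l 0 = ν l 0 / r 0 := by ring
      linarith
    intro κ hκ
    apply max_le
    · positivity
    · have := h1 κ hκ
      linarith
  have h1 := hlow _ hmem
  have h2 := sumlow hk hkr (hr 0) (c := η / 2) (by positivity) (by linarith) (fun l => ν l 0) hνi hν
  rw [Fin.sum_univ_succ] at h1
  simp only [jn_zero, jn_succ] at h1
  have h3 : (0 : ℝ) < k * η ^ 2 := by positivity
  nlinarith

theorem roth_lemma : ∀ n, RL n
  | 0 => RL_zero
  | n + 1 => RL_succ (roth_lemma n)

end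
end Roth


namespace Roth
open MvPolynomial Finset

noncomputable section

variable {n : ℕ}

section
attribute [local instance] Matrix.seminormedAddCommGroup

lemma siegel {ι κ : Type*} [Fintype ι] [Fintype κ] (A : Matrix ι κ ℤ) {B : ℝ} (hB : 1 ≤ B)
    (hA : ∀ i j, |(A i j : ℝ)| ≤ B) (h1 : 0 < Fintype.card ι) (h2 : 2 * Fintype.card ι ≤ Fintype.card κ) :
    ∃ t : κ → ℤ, t ≠ 0 ∧ A.mulVec t = 0 ∧ ∀ j, |(t j : ℝ)| ≤ Fintype.card κ * B := by
  obtain ⟨t, ht0, ht, htn⟩ := Int.Matrix.exists_ne_zero_int_vec_norm_le A (by omega) h1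
  refine ⟨t, ht0, ht, fun j => ?_⟩
  have hAn : ‖A‖ ≤ B := by
    rw [Matrix.norm_le_iff (by linarith)]
    intro i j
    rw [Int.norm_eq_abs]; exact hA i j
  have h3 : |(t j : ℝ)| ≤ ‖t‖ := by
    rw [← Int.norm_eq_abs]; exact norm_le_pi_norm t j
  have h1' : (1 : ℝ) ≤ Fintype.card ι := by exact_mod_cast h1
  have h2' : 2 * (Fintype.card ι : ℝ) ≤ Fintype.card κ := by exact_mod_cast h2
  refine h3.trans (htn.trans ?_)
  have h4 : (1 : ℝ) ≤ Fintype.card κ * max 1 ‖A‖ :=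
    one_le_mul_of_one_le_of_one_le (by linarith) (le_max_left _ _)
  calc _ ≤ ((Fintype.card κ : ℝ) * max 1 ‖A‖) ^ (1 : ℝ) := by
        apply Real.rpow_le_rpow_of_exponent_le h4
        rw [div_le_one (by linarith)]; linarith
    _ = (Fintype.card κ : ℝ) * max 1 ‖A‖ := Real.rpow_one _
    _ ≤ _ := by
      gcongr
      exact max_le hB hAn
end

lemma powrep {α : ℝ} (hα : IsAlgebraic ℚ α) : ∃ (d : ℕ) (a : ℤ) (C : ℝ) (θ : Fin d → ℝ), a ≠ 0 ∧ 1 ≤ C ∧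
    0 < d ∧ ∀ L l : ℕ, l ≤ L → ∃ z : Fin d → ℤ, (∀ i, |(z i : ℝ)| ≤ C ^ (L + 1)) ∧
      (a : ℝ) ^ L * α ^ l = ∑ i, z i * θ i := by
  have h1 : IsAlgebraic ℤ α := (IsFractionRing.isAlgebraic_iff ℤ ℚ ℝ).2 hα
  obtain ⟨a, ha, hint⟩ := h1.exists_integral_multiple
  obtain ⟨d, θ, hθ⟩ := Submodule.fg_iff_exists_fin_generating_family.1 hint.fg_adjoin_singleton
  set β : ℝ := a • α with hβ
  have hone : (1 : ℝ) ∈ Submodule.span ℤ (Set.range θ) := by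
    rw [hθ, Subalgebra.mem_toSubmodule]; exact one_mem _
  obtain ⟨z0, hz0⟩ := (Submodule.mem_span_range_iff_exists_fun ℤ).1 hone
  have hmul : ∀ j, ∃ c : Fin d → ℤ, ∑ i, c i • θ i = β * θ j := by
    intro j
    apply (Submodule.mem_span_range_iff_exists_fun ℤ).1
    rw [hθ, Subalgebra.mem_toSubmodule]
    apply mul_mem (Algebra.self_mem_adjoin_singleton ℤ β)
    rw [← Subalgebra.mem_toSubmodule, ← hθ]
    exact Submodule.subset_span ⟨j, rfl⟩
  choose A hA using hmul
  set C : ℝ := 1 + |(a : ℝ)| + ∑ i, |(z0 i : ℝ)| + ∑ j, ∑ i, |(A j i : ℝ)| with hC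
  have hs1 : 0 ≤ ∑ i, |(z0 i : ℝ)| := by positivity
  have hs2 : 0 ≤ ∑ j, ∑ i, |(A j i : ℝ)| := by positivity
  have ha0 := abs_nonneg (a : ℝ)
  have hC1 : 1 ≤ C := by linarith
  have hpow : ∀ l : ℕ, ∃ z : Fin d → ℤ, (∀ i, |(z i : ℝ)| ≤ C ^ (l + 1)) ∧ β ^ l = ∑ i, z i * θ i := by
    intro l
    induction l with
    | zero =>
      refine ⟨z0, fun i => ?_, ?_⟩
      · have := single_le_sum (f := fun i => |(z0 i : ℝ)|) (fun _ _ => abs_nonneg _) (mem_univ i)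
        simp only [zero_add, pow_one]
        linarith
      · rw [pow_zero, ← hz0]; simp
    | succ l ih =>
      obtain ⟨z, hz, hzs⟩ := ih
      refine ⟨fun i => ∑ j, z j * A j i, fun i => ?_, ?_⟩
      · push_cast
        calc |∑ j, (z j : ℝ) * A j i| ≤ ∑ j, |(z j : ℝ) * A j i| := abs_sum_le_sum_abs _ _
          _ ≤ ∑ j, C ^ (l + 1) * ∑ i, |(A j i : ℝ)| := by
            apply sum_le_sum
            intro j _
            rw [abs_mul]
            gcongr
            · exact hz j
            · exact single_le_sum (f := fun i => |(A j i : ℝ)|) (fun _ _ => abs_nonneg _) (mem_univ i)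
          _ = C ^ (l + 1) * ∑ j, ∑ i, |(A j i : ℝ)| := by rw [mul_sum]
          _ ≤ C ^ (l + 1) * C := by gcongr; linarith
          _ = _ := by rw [← pow_succ]
      · rw [pow_succ', hzs, mul_sum]
        push_cast
        simp only [sum_mul]
        rw [sum_comm]
        apply sum_congr rfl
        intro j _
        have := hA j
        simp only [zsmul_eq_mul] at this
        calc β * (z j * θ j) = z j * (β * θ j) := by ring
          _ = _ := by rw [← this, mul_sum]; exact sum_congr rfl (fun i _ => by ring)
  refine ⟨d, a, C, θ, ha, hC1, ?_, ?_⟩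
  · rcases Nat.eq_zero_or_pos d with rfl | h
    · simp at hz0
    · exact h
  · intro L l hl
    obtain ⟨z, hz, hzs⟩ := hpow l
    refine ⟨fun i => a ^ (L - l) * z i, fun i => ?_, ?_⟩
    · push_cast
      rw [abs_mul, abs_pow]
      calc _ ≤ C ^ (L - l) * C ^ (l + 1) := by
            gcongr
            · linarith
            · exact hz i
        _ = _ := by rw [← pow_add]; congr 1; omega
    · push_cast
      have : (a : ℝ) ^ L = a ^ (L - l) * a ^ l := by rw [← pow_add]; congr 1; omega
      have hb : β = a * α := by rw [hβ]; simp
      rw [this, mul_assoc, ← mul_pow, ← hb, hzs, mul_sum]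
      exact sum_congr rfl (fun i _ => by ring)

lemma expsum {r : ℕ} (hr : 0 < r) {t : ℝ} (ht : 0 ≤ t) :
    ∑ i : Fin (r + 1), Real.exp (t * (1 / 2 - (i : ℕ) / r)) ≤ (r + 1) * Real.exp (t ^ 2 / 8) := by
  have hr' : (0 : ℝ) < r := by exact_mod_cast hr
  have h1 : ∑ i : Fin (r + 1), Real.exp (t * (1 / 2 - (i : ℕ) / r)) =
      ∑ i : Fin (r + 1), Real.exp (-(t * (1 / 2 - (i : ℕ) / r))) := by
    rw [← Equiv.sum_comp Fin.revPerm]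
    apply sum_congr rfl
    intro i _
    congr 1
    rw [Fin.revPerm_apply, Fin.val_rev]
    have : ((r + 1 - ((i : ℕ) + 1) : ℕ) : ℝ) = r - i := by
      have := i.is_lt
      rw [Nat.add_sub_add_right, Nat.cast_sub (by omega)]
    rw [this]
    field_simp
    ring
  have h2 : ∑ i : Fin (r + 1), Real.exp (t * (1 / 2 - (i : ℕ) / r)) =
      ∑ i : Fin (r + 1), Real.cosh (t * (1 / 2 - (i : ℕ) / r)) := by
    simp only [Real.cosh_eq]
    rw [← sum_div, sum_add_distrib, ← h1]; ring
  rw [h2]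
  have h3 : ∀ i ∈ (univ : Finset (Fin (r + 1))), Real.cosh (t * (1 / 2 - (i : ℕ) / r)) ≤ Real.exp (t ^ 2 / 8) := by
    intro i _
    refine (Real.cosh_le_exp_half_sq _).trans (Real.exp_le_exp.2 ?_)
    have h4 : ((i : ℕ) : ℝ) / r ≤ 1 := by
      rw [div_le_one hr']
      have := i.is_lt
      exact_mod_cast Nat.lt_succ_iff.1 this
    have h5 : 0 ≤ ((i : ℕ) : ℝ) / r := by positivity
    have h6 : (1 / 2 - ((i : ℕ) : ℝ) / r) ^ 2 ≤ 1 / 4 := by nlinarith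
    rw [mul_pow]
    nlinarith [sq_nonneg t]
  refine (sum_le_sum h3).trans ?_
  simp

lemma count {m : ℕ} {r : Fin m → ℕ} (hr : ∀ h, 0 < r h) {δ : ℝ} (hδ : 0 < δ) :
    (((univ : Finset (∀ h, Fin (r h + 1))).filter
      (fun b => ∑ h, (1 / (r h : ℝ)) * (b h : ℕ) < m * (1 / 2 - δ))).card : ℝ) ≤
      (∏ h, ((r h : ℝ) + 1)) * Real.exp (- (2 * δ ^ 2 * m)) := by
  classical
  set S := ((univ : Finset (∀ h, Fin (r h + 1))).filter
      (fun b => ∑ h, (1 / (r h : ℝ)) * (b h : ℕ) < m * (1 / 2 - δ))) with hS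
  have h1 : ∑ b : (∀ h, Fin (r h + 1)), ∏ h, Real.exp (4 * δ * (1 / 2 - (b h : ℕ) / r h)) ≤
      (∏ h, ((r h : ℝ) + 1)) * Real.exp (2 * δ ^ 2 * m) := by
    have := prod_univ_sum (fun h : Fin m => (univ : Finset (Fin (r h + 1))))
      (fun h i => Real.exp (4 * δ * (1 / 2 - (i : ℕ) / r h)))
    rw [Fintype.piFinset_univ] at this
    rw [← this]
    have e : (∏ h, ((r h : ℝ) + 1)) * Real.exp (2 * δ ^ 2 * m) =
        ∏ h, (((r h : ℝ) + 1) * Real.exp ((4 * δ) ^ 2 / 8)) := by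
      rw [prod_mul_distrib, prod_const, card_univ, Fintype.card_fin, ← Real.exp_nat_mul]
      congr 2; ring
    rw [e]
    apply prod_le_prod
    · intros; positivity
    · intro h _
      exact expsum (hr h) (by positivity)
  have h2 : (S.card : ℝ) * Real.exp (4 * δ ^ 2 * m) ≤
      ∑ b : (∀ h, Fin (r h + 1)), ∏ h, Real.exp (4 * δ * (1 / 2 - (b h : ℕ) / r h)) := by
    rw [← nsmul_eq_mul]
    refine le_trans (card_nsmul_le_sum S _ _ ?_) (sum_le_sum_of_subset_of_nonneg (subset_univ S) ?_)
    · intro b hb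
      rw [← Real.exp_sum]
      apply Real.exp_le_exp.2
      rw [← mul_sum, sum_sub_distrib]
      have hb' := (mem_filter.1 hb).2
      have e : ∑ h, (1 / (r h : ℝ)) * (b h : ℕ) = ∑ h, ((b h : ℕ) : ℝ) / r h := sum_congr rfl (fun h _ => by ring)
      rw [e] at hb'
      simp only [sum_const, card_univ, Fintype.card_fin, nsmul_eq_mul]
      nlinarith
    · intros; positivity
  have h3 := h2.trans h1
  have h4 : Real.exp (4 * δ ^ 2 * m) = Real.exp (2 * δ ^ 2 * m) * Real.exp (2 * δ ^ 2 * m) := by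
    rw [← Real.exp_add]; congr 1; ring
  rw [h4, ← mul_assoc] at h3
  have h5 := le_of_mul_le_mul_right h3 (Real.exp_pos _)
  rw [Real.exp_neg, ← div_eq_mul_inv, le_div_iff₀ (Real.exp_pos _)]
  exact h5

end
end Roth


namespace Roth
open MvPolynomial Finset

noncomputable section

variable {n : ℕ}

def fs {m : ℕ} {r : Fin m → ℕ} (b : ∀ h, Fin (r h + 1)) : Fin m →₀ ℕ :=
  Finsupp.equivFunOnFinite.symm (fun h => (b h : ℕ))

@[simp] lemma fs_apply {m : ℕ} {r : Fin m → ℕ} (b : ∀ h, Fin (r h + 1)) (h : Fin m) : fs b h = (b h : ℕ) := rfl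

lemma fs_inj {m : ℕ} {r : Fin m → ℕ} {b b' : ∀ h, Fin (r h + 1)} (e : fs b = fs b') : b = b' := by
  funext h
  apply Fin.ext
  have := DFunLike.congr_fun e h
  simpa using this

lemma auxpoly {α : ℝ} (hα : IsAlgebraic ℚ α) {δ : ℝ} (hδ : 0 < δ) (hδ1 : δ < 1 / 2) :
    ∃ m : ℕ, 0 < m ∧ ∃ E : ℝ, 1 ≤ E ∧ ∀ r : Fin m → ℕ, (∀ h, 0 < r h) → ∃ P : MvPolynomial (Fin m) ℚ,
      P ≠ 0 ∧ IsInt P ∧ DegLE r P ∧ nrm P ≤ E ^ (∑ h, r h + 1) ∧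
      Ind (fun h => 1 / (r h : ℝ)) (m * (1 / 2 - δ)) (tr (fun _ => α) (map (algebraMap ℚ ℝ) P)) := by
  classical
  obtain ⟨d, a, C, θ, ha, hC, hd, hrep⟩ := powrep hα
  obtain ⟨m, hm0, hm⟩ : ∃ m : ℕ, 0 < m ∧ (2 * d : ℝ) ≤ Real.exp (2 * δ ^ 2 * m) := by
    obtain ⟨m, hm⟩ := exists_nat_gt (2 * d / (2 * δ ^ 2) : ℝ)
    have hp : (0 : ℝ) < 2 * δ ^ 2 := by positivity
    rw [div_lt_iff₀ hp] at hm
    refine ⟨m, ?_, ?_⟩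
    · rcases Nat.eq_zero_or_pos m with rfl | h
      · exfalso
        have : (0 : ℝ) ≤ d := by positivity
        simp at hm; linarith
      · exact h
    · have := Real.add_one_le_exp (2 * δ ^ 2 * m)
      linarith
  refine ⟨m, hm0, 8 * C, by linarith, ?_⟩
  intro r hr
  set Λ := ∑ h, r h with hΛ
  have hdiff : ∀ (b : ∀ h, Fin (r h + 1)) (μ : Fin m →₀ ℕ), ∑ h, (fs b h - μ h) ≤ Λ := by
    intro b μ
    apply sum_le_sum
    intro h _
    have := (b h).is_lt
    simp only [fs_apply]
    omega
  choose z hz hzs using hrep Λ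
  -- equations
  set S := ((univ : Finset (∀ h, Fin (r h + 1))).filter
      (fun b => ∑ h, (1 / (r h : ℝ)) * (b h : ℕ) < m * (1 / 2 - δ))) with hS
  let A : Matrix (S × Fin d) (∀ h, Fin (r h + 1)) ℤ := fun p b =>
    (bin (fs b) (fs p.1.1) : ℤ) * z _ (hdiff b (fs p.1.1)) p.2
  have hN : (Fintype.card (∀ h, Fin (r h + 1)) : ℝ) = ∏ h, ((r h : ℝ) + 1) := by
    rw [Fintype.card_pi]; push_cast; simp
  have hN2 : (Fintype.card (∀ h, Fin (r h + 1)) : ℝ) ≤ 2 ^ Λ := by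
    rw [hN, hΛ, ← prod_pow_eq_pow_sum]
    apply prod_le_prod
    · intros; positivity
    · intro h _
      have := Nat.lt_two_pow_self (n := r h)
      exact_mod_cast this
  have hbin : ∀ (b : ∀ h, Fin (r h + 1)) μ, (bin (fs b) μ : ℝ) ≤ 2 ^ Λ := by
    intro b μ
    have h1 : bin (fs b) μ ≤ 2 ^ Λ := by
      refine (bin_le _ _).trans (Nat.pow_le_pow_right (by norm_num) ?_)
      have := hdiff b 0
      simpa using this
    exact_mod_cast h1
  have h2Λ : (1 : ℝ) ≤ 2 ^ Λ := one_le_pow₀ (by norm_num)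
  have hCΛ : (1 : ℝ) ≤ C ^ (Λ + 1) := one_le_pow₀ hC
  obtain ⟨t, ht0, ht, htn⟩ := siegel A (B := 2 ^ Λ * C ^ (Λ + 1)) (one_le_mul_of_one_le_of_one_le h2Λ hCΛ)
    (by
      intro p b
      simp only [A]
      push_cast
      rw [abs_mul, Nat.abs_cast]
      gcongr
      · exact hbin _ _
      · exact hz _ _ _)
    (by
      rw [Fintype.card_prod, Fintype.card_fin, Fintype.card_coe]
      apply Nat.mul_pos _ hd
      rw [card_pos]
      refine ⟨fun h => 0, ?_⟩
      rw [hS, mem_filter]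
      refine ⟨mem_univ _, ?_⟩
      have : (0 : ℝ) < m := by exact_mod_cast hm0
      simp only [Fin.val_zero, Nat.cast_zero, mul_zero, sum_const_zero]
      apply mul_pos this; linarith)
    (by
      have h1 := count hr hδ
      rw [← hS, ← hN] at h1
      rw [Fintype.card_prod, Fintype.card_fin, Fintype.card_coe]
      have h2 : (2 * (S.card * d) : ℝ) ≤ Fintype.card (∀ h, Fin (r h + 1)) := by
        rw [Real.exp_neg, ← div_eq_mul_inv, le_div_iff₀ (Real.exp_pos _)] at h1
        have : (0 : ℝ) ≤ S.card := by positivity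
        nlinarith
      exact_mod_cast h2)
  let P : MvPolynomial (Fin m) ℚ := ∑ b, monomial (fs b) ((t b : ℤ) : ℚ)
  have hcoef : ∀ b, coeff (fs b) P = t b := by
    intro b
    simp only [P, coeff_sum, coeff_monomial]
    rw [sum_eq_single b]
    · simp
    · intro b' _ hb
      rw [if_neg (fun e => hb (fs_inj e))]
    · simp
  have hsupp : ∀ ν ∈ P.support, ∃ b : (∀ h, Fin (r h + 1)), ν = fs b := by
    intro ν hν
    by_contra hcon
    push Not at hcon
    rw [mem_support_iff] at hν
    apply hν
    simp only [P, coeff_sum, coeff_monomial]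
    apply sum_eq_zero
    intro b _
    rw [if_neg (fun e => hcon b e.symm)]
  refine ⟨P, ?_, ?_, ?_, ?_, ?_⟩
  · intro h0
    apply ht0
    funext b
    have := hcoef b
    rw [h0, coeff_zero] at this
    exact_mod_cast this.symm
  · intro ν
    simp only [P, coeff_sum, coeff_monomial]
    exact ⟨∑ b, if fs b = ν then t b else 0, by push_cast; rfl⟩
  · intro ν hν h
    obtain ⟨b, rfl⟩ := hsupp ν hν
    have := (b h).is_lt
    simp only [fs_apply]
    omega
  · refine (nrm_sum _ _).trans ?_
    calc _ ≤ ∑ b : (∀ h, Fin (r h + 1)), (Fintype.card (∀ h, Fin (r h + 1)) : ℝ) * (2 ^ Λ * C ^ (Λ + 1)) := by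
          apply sum_le_sum
          intro b _
          rw [nrm_monomial]
          simpa using htn b
      _ = (Fintype.card (∀ h, Fin (r h + 1)) : ℝ) * ((Fintype.card (∀ h, Fin (r h + 1)) : ℝ) * (2 ^ Λ * C ^ (Λ + 1))) := by
          rw [sum_const, card_univ, nsmul_eq_mul]
      _ ≤ 2 ^ Λ * (2 ^ Λ * (2 ^ Λ * C ^ (Λ + 1))) := by gcongr
      _ = (8 : ℝ) ^ Λ * C ^ (Λ + 1) := by
          rw [show (8 : ℝ) = 2 * 2 * 2 by norm_num, mul_pow, mul_pow]; ring
      _ ≤ (8 : ℝ) ^ (Λ + 1) * C ^ (Λ + 1) := by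
          gcongr
          · norm_num
          · omega
      _ = _ := by rw [mul_pow]
  · intro μ hμ
    by_contra hlt
    push Not at hlt
    rw [mem_support_iff] at hμ
    have hco : coeff μ (tr (fun _ => α) (map (algebraMap ℚ ℝ) P)) =
        ∑ b, (t b : ℝ) * ((bin (fs b) μ : ℕ) * α ^ (∑ h, (fs b h - μ h))) := by
      simp only [P, map_sum, map_monomial, coeff_sum, coeff_tr_monomial, prod_pow_eq_pow_sum]
      simp
    have hbox : ∀ h, μ h < r h + 1 := by
      by_contra hcon
      push Not at hcon
      obtain ⟨h, hh⟩ := hcon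
      apply hμ
      rw [hco]
      apply sum_eq_zero
      intro b _
      rw [bin_eq_zero]
      · simp
      · intro hle
        have h1 := Finsupp.le_def.1 hle h
        have := (b h).is_lt
        simp only [fs_apply] at h1
        omega
    obtain ⟨c, rfl⟩ : ∃ c : (∀ h, Fin (r h + 1)), μ = fs c := ⟨fun h => ⟨μ h, hbox h⟩, by ext h; simp⟩
    have hcS : c ∈ S := by
      rw [hS, mem_filter]
      exact ⟨mem_univ _, by simpa using hlt⟩
    have ha' : (a : ℝ) ^ Λ ≠ 0 := pow_ne_zero _ (by exact_mod_cast ha)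
    apply hμ
    apply (mul_eq_zero_iff_left ha').1
    rw [hco, mul_sum]
    have h1 : ∀ b, (a : ℝ) ^ Λ * ((t b : ℝ) * ((bin (fs b) (fs c) : ℕ) * α ^ (∑ h, (fs b h - fs c h)))) =
        ∑ i, θ i * ((A (⟨c, hcS⟩, i) b : ℝ) * t b) := by
      intro b
      calc _ = (t b : ℝ) * (bin (fs b) (fs c) : ℕ) * (a ^ Λ * α ^ (∑ h, (fs b h - fs c h))) := by ring
        _ = _ := by
          rw [hzs _ (hdiff b (fs c)), mul_sum]
          apply sum_congr rfl
          intro i _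
          simp only [A]
          push_cast
          ring
    simp only [h1]
    rw [sum_comm]
    apply sum_eq_zero
    intro i _
    rw [← mul_sum]
    have h2 := congrFun ht (⟨c, hcS⟩, i)
    simp only [Matrix.mulVec, dotProduct, Pi.zero_apply] at h2
    have h3 : ∑ b, (A (⟨c, hcS⟩, i) b : ℝ) * t b = 0 := by exact_mod_cast h2
    rw [h3, mul_zero]

end
end Roth


namespace Roth
open MvPolynomial Finset

noncomputable section

variable {n : ℕ}

lemma map_tr (x : Fin n → ℚ) (P : MvPolynomial (Fin n) ℚ) :
    map (algebraMap ℚ ℝ) (tr x P) = tr (fun h => (x h : ℝ)) (map (algebraMap ℚ ℝ) P) := by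
  induction P using MvPolynomial.induction_on with
  | C c => simp [tr]
  | add p q hp hq => rw [map_add, map_add, map_add, map_add, hp, hq]
  | mul_X p i hp => rw [map_mul, map_mul, map_mul, map_mul, hp]; simp [tr]

lemma card_box {m : ℕ} (r : Fin m → ℕ) : (Fintype.card (∀ h, Fin (r h + 1)) : ℝ) ≤ 2 ^ (∑ h, r h) := by
  have h1 : Fintype.card (∀ h, Fin (r h + 1)) ≤ 2 ^ (∑ h, r h) := by
    rw [Fintype.card_pi, ← prod_pow_eq_pow_sum]
    apply prod_le_prod'
    intro h _
    have := Nat.lt_two_pow_self (n := r h)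
    simpa using this
  exact_mod_cast h1

lemma bin_deg {m : ℕ} {r : Fin m → ℕ} {κ : Fin m →₀ ℕ} (hκ : ∀ h, κ h ≤ r h) (μ) :
    (bin κ μ : ℝ) ≤ 2 ^ (∑ h, r h) := by
  have h1 : bin κ μ ≤ 2 ^ (∑ h, r h) := by
    refine (bin_le _ _).trans (Nat.pow_le_pow_right (by norm_num) ?_)
    exact sum_le_sum (fun h _ => hκ h)
  exact_mod_cast h1

lemma Q_bound {m : ℕ} {r : Fin m → ℕ} {P : MvPolynomial (Fin m) ℚ} (hd : DegLE r P) (α : ℝ) (ν : Fin m →₀ ℕ) :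
    |coeff ν (tr (fun _ => α) (map (algebraMap ℚ ℝ) P))| ≤
      (2 * (1 + |α|)) ^ (∑ h, r h) * nrm P := by
  have hsup : (map (algebraMap ℚ ℝ) P).support = P.support :=
    support_map_of_injective P (algebraMap ℚ ℝ).injective
  rw [coeff_tr, hsup, nrm, mul_sum]
  refine (abs_sum_le_sum_abs _ _).trans (sum_le_sum ?_)
  intro κ hκ
  have ha := abs_nonneg α
  rw [coeff_map, abs_mul, mul_comm, eq_ratCast]
  refine mul_le_mul_of_nonneg_right ?_ (abs_nonneg _)
  rw [abs_mul, Nat.abs_cast, mul_pow]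
  refine mul_le_mul (bin_deg (hd κ hκ) ν) ?_ (abs_nonneg _) (by positivity)
  rw [prod_pow_eq_pow_sum, abs_pow]
  calc |α| ^ (∑ h, (κ h - ν h)) ≤ (1 + |α|) ^ (∑ h, (κ h - ν h)) := by gcongr; linarith
    _ ≤ _ := by
      apply pow_le_pow_right₀ (by linarith)
      apply sum_le_sum
      intro h _
      have := hd κ hκ h
      omega

lemma Q_deg {m : ℕ} {r : Fin m → ℕ} {P : MvPolynomial (Fin m) ℝ} (hd : DegLE r P) (x : Fin m → ℝ) :
    DegLE r (tr x P) := by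
  intro ν hν h
  by_contra hcon
  rw [mem_support_iff, coeff_tr] at hν
  apply hν
  apply sum_eq_zero
  intro κ hκ
  rw [bin_eq_zero]
  · simp
  · intro hle
    have h1 := Finsupp.le_def.1 hle h
    have := hd κ hκ h
    omega

lemma denom {m : ℕ} {r : Fin m → ℕ} {P : MvPolynomial (Fin m) ℚ} (hd : DegLE r P) (hi : IsInt P) (ξ : Fin m → ℚ)
    (μ : Fin m →₀ ℕ) (h0 : coeff μ (tr ξ P) ≠ 0) :
    1 ≤ |((coeff μ (tr ξ P) : ℚ) : ℝ)| * ∏ h, ((ξ h).den : ℝ) ^ r h := by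
  have h1 : ∃ z : ℤ, coeff μ (tr ξ P) * ∏ h, ((ξ h).den : ℚ) ^ r h = z := by
    choose z hz using hi
    refine ⟨∑ ν ∈ P.support, z ν * (bin ν μ * ∏ h, ((ξ h).num ^ (ν h - μ h) * (ξ h).den ^ (r h - (ν h - μ h)))), ?_⟩
    rw [coeff_tr, sum_mul]
    push_cast
    apply sum_congr rfl
    intro ν hν
    rw [hz, mul_assoc, mul_assoc, ← prod_mul_distrib]
    congr 2
    apply prod_congr rfl
    intro h _
    have hle : ν h - μ h ≤ r h := by have := hd ν hν h; omega
    have hden : ((ξ h).den : ℚ) ≠ 0 := by exact_mod_cast (ξ h).den_ne_zero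
    have e : ((ξ h).den : ℚ) ^ r h = ((ξ h).den : ℚ) ^ (ν h - μ h) * ((ξ h).den : ℚ) ^ (r h - (ν h - μ h)) := by
      rw [← pow_add]; congr 1; omega
    rw [e, ← mul_assoc, ← mul_pow, Rat.mul_den_eq_num]
  obtain ⟨z, hz⟩ := h1
  have hprod : (0 : ℝ) < ∏ h, ((ξ h).den : ℝ) ^ r h :=
    prod_pos (fun h _ => pow_pos (by exact_mod_cast (ξ h).den_pos) _)
  have hz' : ((coeff μ (tr ξ P) : ℚ) : ℝ) * ∏ h, ((ξ h).den : ℝ) ^ r h = z := by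
    exact_mod_cast congrArg (fun q : ℚ => (q : ℝ)) hz
  rw [← abs_of_pos hprod, ← abs_mul, hz']
  have : z ≠ 0 := by
    rintro rfl
    have h2 : ((coeff μ (tr ξ P) : ℚ) : ℝ) ≠ 0 := by exact_mod_cast h0
    rw [Int.cast_zero] at hz'
    exact mul_ne_zero h2 hprod.ne' hz'
  exact_mod_cast Int.one_le_abs this

lemma vanish {m : ℕ} (hm : 0 < m) (α : ℝ) {ε : ℝ} (hε : 0 < ε) (hε1 : ε ≤ 1) {E : ℝ} (hE : 1 ≤ E) :
    ∃ σ : ℝ, 0 < σ ∧ ∀ (r : Fin m → ℕ) (ξ : Fin m → ℚ) (L : ℝ) (P : MvPolynomial (Fin m) ℚ), 0 < L →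
      (∀ h, 0 < r h) → (∀ h, |α - ξ h| ≤ ((ξ h).den : ℝ) ^ (-(2 + ε))) →
      (∀ h, L ≤ r h * Real.log (ξ h).den) → (∀ h, r h * Real.log (ξ h).den ≤ (1 + ε / 20) * L) →
      (∀ h, (r h : ℝ) ≤ σ * L) → 1 ≤ σ * L → IsInt P → DegLE r P → nrm P ≤ E ^ (∑ h, r h + 1) →
      Ind (fun h => 1 / (r h : ℝ)) (m * (1 / 2 - ε / 20)) (tr (fun _ => α) (map (algebraMap ℚ ℝ) P)) →
      ∀ μ ∈ (tr ξ P).support, ε / 20 ≤ ∑ h, (1 / (r h : ℝ)) * μ h := by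
  classical
  set F : ℝ := 8 * (1 + |α|) * E with hF
  have ha := abs_nonneg α
  have hF1 : 1 ≤ F := by
    have : (1 : ℝ) ≤ 8 * (1 + |α|) := by linarith
    exact one_le_mul_of_one_le_of_one_le this hE
  have hlF : 0 ≤ Real.log F := Real.log_nonneg hF1
  have hm1 : (1 : ℝ) ≤ m := by exact_mod_cast hm
  refine ⟨ε * m / (20 * (m + 1) * (Real.log F + 1)), by positivity, ?_⟩
  set σ := ε * m / (20 * (m + 1) * (Real.log F + 1)) with hσ
  intro r ξ L P hL hr happ hL1 hL2 hrL h1L hPi hPd hPn hInd μ hμ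
  by_contra hlt
  push Not at hlt
  rw [mem_support_iff] at hμ
  have hlow := denom hPd hPi ξ μ hμ
  have hden : ∀ h, (0 : ℝ) < (ξ h).den := fun h => by exact_mod_cast (ξ h).den_pos
  set Λ := ∑ h, r h with hΛ
  have hprod : ∏ h, ((ξ h).den : ℝ) ^ r h ≤ Real.exp (m * ((1 + ε / 20) * L)) := by
    have : ∀ h, ((ξ h).den : ℝ) ^ r h = Real.exp (r h * Real.log (ξ h).den) := by
      intro h
      rw [Real.exp_nat_mul, Real.exp_log (hden h)]
    simp only [this]
    rw [← Real.exp_sum]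
    apply Real.exp_le_exp.2
    refine (sum_le_sum (fun h _ => hL2 h)).trans ?_
    simp
  set Q := tr (fun _ => α) (map (algebraMap ℚ ℝ) P) with hQ
  have hdeg : DegLE r Q := by
    apply Q_deg
    intro ν hν
    rw [support_map_of_injective P (algebraMap ℚ ℝ).injective] at hν
    exact hPd ν hν
  have hc : ((coeff μ (tr ξ P) : ℚ) : ℝ) = coeff μ (tr (fun h => (ξ h : ℝ) - α) Q) := by
    rw [hQ, tr_tr]
    simp only [sub_add_cancel]
    rw [← map_tr, coeff_map]; simp
  have hcard : (Q.support.card : ℝ) ≤ 2 ^ Λ := by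
    refine le_trans ?_ (card_box r)
    have : Q.support ⊆ univ.image (fun b : (∀ h, Fin (r h + 1)) => fs b) := by
      intro ν hν
      rw [mem_image]
      exact ⟨fun h => ⟨ν h, Nat.lt_succ_iff.2 (hdeg ν hν h)⟩, mem_univ _, by ext h; simp⟩
    have h2 := (card_le_card this).trans card_image_le
    exact_mod_cast h2
  set X : ℝ := Real.exp (-((2 + ε) * (L * (m * (1 / 2 - ε / 20) - ε / 20)))) with hX
  have hterm : ∀ ν ∈ Q.support, |coeff ν Q * ((bin ν μ : ℕ) * ∏ h, ((ξ h : ℝ) - α) ^ (ν h - μ h))| ≤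
      (2 * (1 + |α|)) ^ Λ * E ^ (Λ + 1) * (2 ^ Λ * X) := by
    intro ν hν
    by_cases hle : μ ≤ ν
    · rw [abs_mul, abs_mul, Nat.abs_cast]
      refine mul_le_mul ?_ ?_ (by positivity) (by positivity)
      · exact (Q_bound hPd α ν).trans (by gcongr)
      · refine mul_le_mul (bin_deg (hdeg ν hν) μ) ?_ (by positivity) (by positivity)
        rw [abs_prod]
        have h1 : ∀ h ∈ (univ : Finset (Fin m)), |((ξ h : ℝ) - α) ^ (ν h - μ h)| ≤
            Real.exp (-((2 + ε) * (L * (1 / (r h : ℝ) * ν h - 1 / (r h : ℝ) * μ h)))) := by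
          intro h _
          rw [abs_pow, abs_sub_comm]
          have hrh : (0 : ℝ) < r h := by exact_mod_cast hr h
          have hsub : ((ν h - μ h : ℕ) : ℝ) = ν h - μ h := by
            rw [Nat.cast_sub (Finsupp.le_def.1 hle h)]
          calc |α - ξ h| ^ (ν h - μ h) ≤ (((ξ h).den : ℝ) ^ (-(2 + ε))) ^ (ν h - μ h) := by
                gcongr; exact happ h
            _ = Real.exp ((ν h - μ h : ℕ) * (Real.log (ξ h).den * (-(2 + ε)))) := by
                rw [Real.rpow_def_of_pos (hden h), Real.exp_nat_mul]
            _ ≤ _ := by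
                apply Real.exp_le_exp.2
                have h3 : L * (1 / r h) ≤ Real.log (ξ h).den := by
                  rw [mul_one_div, div_le_iff₀ hrh]; linarith [hL1 h]
                have h4 : 0 ≤ (2 + ε) * ((ν h - μ h : ℕ) : ℝ) := by positivity
                have h5 := mul_le_mul_of_nonneg_left h3 h4
                rw [hsub] at h5 ⊢
                nlinarith
        refine (prod_le_prod (fun _ _ => abs_nonneg _) h1).trans ?_
        rw [← Real.exp_sum, hX]
        apply Real.exp_le_exp.2
        rw [sum_neg_distrib, ← mul_sum, ← mul_sum, sum_sub_distrib]
        have h6 := hInd ν hν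
        have h7 : (m * (1 / 2 - ε / 20) - ε / 20 : ℝ) ≤
            ∑ h, 1 / (r h : ℝ) * ν h - ∑ h, 1 / (r h : ℝ) * μ h := by linarith
        apply neg_le_neg
        gcongr
    · rw [bin_eq_zero hle]
      simp only [Nat.cast_zero, zero_mul, mul_zero, abs_zero]
      positivity
  have hup : |((coeff μ (tr ξ P) : ℚ) : ℝ)| ≤ F ^ (Λ + 1) * X := by
    rw [hc, coeff_tr]
    refine (abs_sum_le_sum_abs _ _).trans ((sum_le_sum hterm).trans ?_)
    rw [sum_const, nsmul_eq_mul]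
    calc _ ≤ 2 ^ Λ * ((2 * (1 + |α|)) ^ Λ * E ^ (Λ + 1) * (2 ^ Λ * X)) := by gcongr
      _ = (8 * (1 + |α|)) ^ Λ * E ^ (Λ + 1) * X := by
        rw [show 8 * (1 + |α|) = 2 * (2 * (1 + |α|)) * 2 by ring]; simp only [mul_pow]; ring
      _ ≤ (8 * (1 + |α|)) ^ (Λ + 1) * E ^ (Λ + 1) * X := by
        gcongr
        · linarith
        · omega
      _ = _ := by rw [hF, mul_pow _ E]
  have hFexp : F ^ (Λ + 1) ≤ Real.exp (ε * m / 20 * L) := by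
    have hF0 : 0 < F := by linarith
    rw [← Real.exp_log (pow_pos hF0 _), Real.log_pow]
    apply Real.exp_le_exp.2
    have h1 : ((Λ + 1 : ℕ) : ℝ) ≤ (m + 1) * (σ * L) := by
      rw [hΛ]; push_cast
      have := sum_le_sum (fun h (_ : h ∈ univ) => hrL h)
      simp only [sum_const, card_univ, Fintype.card_fin, nsmul_eq_mul] at this
      linarith
    have h2 : σ * (20 * (m + 1) * (Real.log F + 1)) = ε * m := by
      rw [hσ]; field_simp
    have hσ0 : 0 < σ := by rw [hσ]; positivity
    calc ((Λ + 1 : ℕ) : ℝ) * Real.log F ≤ (m + 1) * (σ * L) * (Real.log F + 1) := by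
          gcongr; linarith
      _ = (σ * (20 * (m + 1) * (Real.log F + 1))) / 20 * L := by ring
      _ = _ := by rw [h2]
  have hfin : (1 : ℝ) ≤ Real.exp (ε * m / 20 * L - (2 + ε) * (L * (m * (1 / 2 - ε / 20) - ε / 20)) + m * ((1 + ε / 20) * L)) := by
    refine hlow.trans ?_
    rw [Real.exp_add, sub_eq_add_neg, Real.exp_add]
    have hp0 : 0 ≤ ∏ h, ((ξ h).den : ℝ) ^ r h := by positivity
    refine mul_le_mul (hup.trans ?_) hprod hp0 (by positivity)
    exact mul_le_mul_of_nonneg_right hFexp (by positivity)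
  rw [Real.one_le_exp_iff] at hfin
  have hneg : ε * m / 20 - (2 + ε) * (m * (1 / 2 - ε / 20) - ε / 20) + m * (1 + ε / 20) < 0 := by
    have hx : 0 < ε * m := by positivity
    nlinarith [mul_le_mul_of_nonneg_left hε1 hx.le, mul_le_mul_of_nonneg_left hm1 hε.le, mul_le_mul_of_nonneg_left hε1 hε.le]
  have : (ε * m / 20 - (2 + ε) * (m * (1 / 2 - ε / 20) - ε / 20) + m * (1 + ε / 20)) * L < 0 :=
    mul_neg_of_neg_of_pos hneg hL
  nlinarith

end
end Roth


namespace Roth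
open MvPolynomial Finset

noncomputable section

lemma fin_box (A B : ℕ) : {ξ : ℚ | ξ.num.natAbs ≤ A ∧ ξ.den ≤ B}.Finite := by
  have h1 : ((Set.Icc (-(A : ℤ)) A) ×ˢ (Set.Iic B)).Finite :=
    (Set.finite_Icc _ _).prod (Set.finite_Iic _)
  refine Set.Finite.of_finite_image (f := fun ξ : ℚ => (ξ.num, ξ.den)) (h1.subset ?_) ?_
  · rintro _ ⟨ξ, ⟨h2, h3⟩, rfl⟩
    refine ⟨?_, h3⟩
    simp only [Set.mem_Icc]
    omega
  · intro x _ y _ h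
    simp only [Prod.mk.injEq] at h
    exact Rat.ext h.1 h.2

lemma unbounded {α ε : ℝ} (hε : 0 < ε) (hT : ¬ {ξ : ℚ | |α - ξ| ≤ (ξ.den : ℝ) ^ (-(2 + ε))}.Finite) (B : ℝ) :
    ∃ ξ : ℚ, |α - ξ| ≤ (ξ.den : ℝ) ^ (-(2 + ε)) ∧ B < Real.log ξ.den := by
  by_contra hcon
  push Not at hcon
  apply hT
  refine (fin_box ⌈(|α| + 1) * Real.exp B⌉₊ ⌈Real.exp B⌉₊).subset ?_
  intro ξ hξ
  have hd0 : (0 : ℝ) < ξ.den := by exact_mod_cast ξ.den_pos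
  have hd1 : (1 : ℝ) ≤ ξ.den := by exact_mod_cast ξ.den_pos
  have h1 := hcon ξ hξ
  rw [Real.log_le_iff_le_exp hd0] at h1
  constructor
  · have h2 : |α - ξ| ≤ 1 := le_trans hξ (Real.rpow_le_one_of_one_le_of_nonpos hd1 (by linarith))
    have h3 : |(ξ : ℝ)| ≤ |α| + 1 := by
      have := abs_sub_abs_le_abs_sub (ξ : ℝ) α
      rw [abs_sub_comm] at this
      linarith
    have h4 : ((ξ.num.natAbs : ℕ) : ℝ) = |(ξ : ℝ)| * ξ.den := by
      rw [Nat.cast_natAbs, Int.cast_abs]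
      have : (ξ.num : ℝ) = ξ * ξ.den := by exact_mod_cast congrArg (fun q : ℚ => (q : ℝ)) (Rat.mul_den_eq_num ξ).symm
      rw [this, abs_mul, abs_of_pos hd0]
    have h5 : ((ξ.num.natAbs : ℕ) : ℝ) ≤ (|α| + 1) * Real.exp B := by
      rw [h4]; gcongr
    exact_mod_cast h5.trans (Nat.le_ceil _)
  · exact_mod_cast h1.trans (Nat.le_ceil _)

lemma main_fin {α : ℝ} (hα : IsAlgebraic ℚ α) {ε : ℝ} (hε : 0 < ε) (hε1 : ε ≤ 1) :
    {ξ : ℚ | |α - ξ| ≤ (ξ.den : ℝ) ^ (-(2 + ε))}.Finite := by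
  by_contra hT
  have hδ : 0 < ε / 20 := by positivity
  obtain ⟨m, hm, E, hE, haux⟩ := auxpoly hα hδ (by linarith)
  obtain ⟨σ, hσ, hRL⟩ := roth_lemma m (ε / 20) hδ
  obtain ⟨σ₂, hσ₂, hvan⟩ := vanish hm α hε hε1 hE
  have hlE : 0 ≤ Real.log E := Real.log_nonneg hE
  set s := min (min σ σ₂) (σ / ((m + 1) * (Real.log E + 1))) with hs
  have hs0 : 0 < s := lt_min (lt_min hσ hσ₂) (by positivity)
  have hsσ : s ≤ σ := (min_le_left _ _).trans (min_le_left _ _)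
  have hsσ₂ : s ≤ σ₂ := (min_le_left _ _).trans (min_le_right _ _)
  have hsE : s * ((m + 1) * (Real.log E + 1)) ≤ σ := by
    rw [← le_div_iff₀ (by positivity)]; exact min_le_right _ _
  choose pick hpick hpickB using unbounded hε hT
  set K := 2 / σ + 1 with hK
  have hK1 : 1 ≤ K := by have : 0 < 2 / σ := by positivity
                         linarith
  have hKσ : 2 ≤ K * σ := by
    rw [hK, add_mul, div_mul_cancel₀ _ hσ.ne']; linarith
  obtain ⟨x, hx0, hxS⟩ : ∃ x : ℕ → ℚ, x 0 = pick (2 / s) ∧ ∀ k, x (k + 1) = pick (K * Real.log (x k).den) :=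
    ⟨fun k => Nat.rec (pick (2 / s)) (fun _ q => pick (K * Real.log q.den)) k, rfl, fun _ => rfl⟩
  let y : ℕ → ℝ := fun k => Real.log (x k).den
  have hx : ∀ k : ℕ, |α - ((x k : ℚ) : ℝ)| ≤ ((x k).den : ℝ) ^ (-(2 + ε)) := by
    intro k
    cases k with
    | zero => rw [hx0]; exact hpick _
    | succ k => rw [hxS]; exact hpick _
  have hy0 : 2 / s < y 0 := by simp only [y]; rw [hx0]; exact hpickB _
  have hyS : ∀ k, K * y k < y (k + 1) := fun k => by simp only [y]; rw [hxS]; exact hpickB _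
  have h2s : 0 < 2 / s := by positivity
  have hyk : ∀ k, 2 / s < y k := by
    intro k
    induction k with
    | zero => exact hy0
    | succ k ih =>
      have := hyS k
      nlinarith
  have hmono : StrictMono y := by
    apply strictMono_nat_of_lt_succ
    intro k
    have := hyS k
    have := hyk k
    nlinarith
  have hyK : ∀ a b, a < b → K * y a ≤ y b := by
    intro a b hab
    exact (hyS a).le.trans (hmono.monotone hab)
  let ξ : Fin m → ℚ := fun h => x (h.rev : ℕ)
  let w : Fin m → ℝ := fun h => y (h.rev : ℕ)
  have hw0 : ∀ h, 0 < w h := fun h => h2s.trans (hyk _)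
  set L : ℝ := (∑ h, w h) / (ε / 20) + 1 / s with hL
  have hsum0 : 0 ≤ ∑ h, w h := sum_nonneg (fun h _ => (hw0 h).le)
  have hL0 : 0 < L := by positivity
  have hLs : 1 ≤ s * L := by
    have h1 : 1 / s ≤ L := by
      have : 0 ≤ (∑ h, w h) / (ε / 20) := by positivity
      linarith
    rw [div_le_iff₀ hs0] at h1; linarith
  have hLw : ∀ h, w h ≤ ε / 20 * L := by
    intro h
    have h1 : (∑ h, w h) / (ε / 20) ≤ L := by
      have : 0 ≤ 1 / s := by positivity
      linarith
    rw [div_le_iff₀ hδ] at h1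
    have := single_le_sum (f := w) (fun h _ => (hw0 h).le) (mem_univ h)
    linarith
  let r : Fin m → ℕ := fun h => ⌈L / w h⌉₊
  have hr : ∀ h, 0 < r h := fun h => Nat.ceil_pos.2 (div_pos hL0 (hw0 h))
  have hr1 : ∀ h, L ≤ r h * w h := by
    intro h
    have := Nat.le_ceil (L / w h)
    rwa [div_le_iff₀ (hw0 h)] at this
  have hr2 : ∀ h, r h * w h ≤ (1 + ε / 20) * L := by
    intro h
    have h1 := (Nat.ceil_lt_add_one (a := L / w h) (by have := hw0 h; positivity)).le
    have h2 := mul_le_mul_of_nonneg_right h1 (hw0 h).le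
    rw [add_mul, div_mul_cancel₀ _ (hw0 h).ne', one_mul] at h2
    have := hLw h
    calc _ ≤ L + w h := h2
      _ ≤ _ := by linarith
  have hr3 : ∀ h, r h * w h ≤ 2 * L := by
    intro h
    refine (hr2 h).trans ?_
    gcongr
    linarith
  have hrs : ∀ h, (r h : ℝ) ≤ s * L := by
    intro h
    have h1 := hr3 h
    have h2 : 2 ≤ s * w h := by
      have := (hyk (h.rev : ℕ)).le
      rw [div_le_iff₀ hs0] at this
      have e : w h = y (h.rev : ℕ) := rfl
      rw [e]; linarith
    have h3 : (r h : ℝ) * w h ≤ (s * L) * w h := by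
      have := mul_le_mul_of_nonneg_right h2 hL0.le
      linarith
    exact le_of_mul_le_mul_right h3 (hw0 h)
  have hrr : ∀ i j, i < j → (r i : ℝ) ≤ σ * r j := by
    intro i j hij
    have h1 : K * w j ≤ w i := hyK _ _ (by
      have : j.rev < i.rev := Fin.rev_lt_rev.2 hij
      exact this)
    have h2 : (r i : ℝ) * (K * w j) ≤ r i * w i := by gcongr
    have h3 : (r i : ℝ) * (K * w j) ≤ 2 * (r j * w j) := by
      have := hr3 i; have := hr1 j; linarith
    have h4 : (r i : ℝ) * K ≤ 2 * r j := by
      apply le_of_mul_le_mul_right _ (hw0 j)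
      linarith
    have h5 : (2 : ℝ) * r j ≤ K * σ * r j := by gcongr
    have h6 : (r i : ℝ) * K ≤ (σ * r j) * K := by linarith
    exact le_of_mul_le_mul_right h6 (by linarith)
  obtain ⟨P, hP, hPi, hPd, hPn, hPI⟩ := haux r hr
  have hPexp : nrm P ≤ Real.exp (σ * L) := by
    refine hPn.trans ?_
    have hE0 : 0 < E := by linarith
    rw [← Real.exp_log (pow_pos hE0 _), Real.log_pow]
    apply Real.exp_le_exp.2
    have h1 : ((∑ h, r h + 1 : ℕ) : ℝ) ≤ (m + 1) * (s * L) := by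
      push_cast
      have := sum_le_sum (fun h (_ : h ∈ univ) => hrs h)
      simp only [sum_const, card_univ, Fintype.card_fin, nsmul_eq_mul] at this
      linarith
    calc ((∑ h, r h + 1 : ℕ) : ℝ) * Real.log E ≤ (m + 1) * (s * L) * (Real.log E + 1) := by
          gcongr; linarith
      _ = (s * ((m + 1) * (Real.log E + 1))) * L := by ring
      _ ≤ _ := by gcongr
  obtain ⟨μ, hμ, hμlt⟩ := hRL r ξ L P hL0 hr hrr hr1
    (fun h => (hrs h).trans (by gcongr)) hP hPi hPd hPexp
  have := hvan r ξ L P hL0 hr (fun h => hx _) hr1 hr2 (fun h => (hrs h).trans (by gcongr))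
    (hLs.trans (by gcongr)) hPi hPd hPn hPI μ hμ
  linarith

end
end Roth

/-- **Roth's theorem** over `ℚ` with `S` consisting of the archimedean place:
for every real number `α` algebraic over `ℚ` and every `ε > 0`, the set of
rational numbers `ξ` with `min {1, |α - ξ|} ≤ H(ξ) ^ (-(2+ε))` is finite. -/
theorem roth_rationals (α : ℝ) (hα : IsAlgebraic ℚ α) (ε : ℝ) (hε : 0 < ε) :
    {ξ : ℚ | min 1 |α - (ξ : ℝ)| ≤ (ratHeight ξ : ℝ) ^ (-(2 + ε) : ℝ)}.Finite := by
  set e := min ε 1 with he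
  have he0 : 0 < e := lt_min hε one_pos
  have hee : e ≤ ε := min_le_left _ _
  refine ((Roth.main_fin hα he0 (min_le_right _ _)).union (Roth.fin_box 1 1)).subset ?_
  intro ξ hξ
  simp only [Set.mem_setOf_eq] at hξ
  by_cases h1 : ratHeight ξ ≤ 1
  · right
    exact max_le_iff.1 h1
  · left
    have h2 : (1 : ℝ) < ratHeight ξ := by exact_mod_cast not_le.1 h1
    have h3 : (ratHeight ξ : ℝ) ^ (-(2 + ε) : ℝ) < 1 :=
      Real.rpow_lt_one_of_one_lt_of_neg h2 (by linarith)
    have h4 : |α - (ξ : ℝ)| ≤ (ratHeight ξ : ℝ) ^ (-(2 + ε) : ℝ) := by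
      rcases min_le_iff.1 hξ with h | h
      · linarith
      · exact h
    have hd0 : (0 : ℝ) < ξ.den := by exact_mod_cast ξ.den_pos
    have hdH : (ξ.den : ℝ) ≤ ratHeight ξ := by exact_mod_cast le_max_right _ _
    refine h4.trans ?_
    calc (ratHeight ξ : ℝ) ^ (-(2 + ε) : ℝ) ≤ (ratHeight ξ : ℝ) ^ (-(2 + e) : ℝ) :=
          Real.rpow_le_rpow_of_exponent_le h2.le (by linarith)
      _ ≤ _ := Real.rpow_le_rpow_of_nonpos hd0 hdH (by linarith)
end

section
/- Let E be a real inner product space of dimension at least 2, let z, z', w ∈ E, and let ρ > 0 satisfy ρ ≤ ‖z − w‖ and ρ ≤ ‖z' − w‖. Then there exists a path γ : [0,1] → E that is Lipschitz with constant (π/2)·‖z − z'‖ (hence of length at most (π/2)·‖z − z'‖), with γ(0) = z, γ(1) = z', ‖γ(t) − w‖ ≥ ρ for all t ∈ [0,1], and such that every point of the path lies within distance ρ of the segment from z to z', i.e., for every t ∈ [0,1] there is s ∈ [0,1] with ‖γ(t) − (z + s·(z' − z))‖ ≤ ρ. (The path-construction claim proved inside the proof of Lemma 6.8.) -/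
open scoped Real

section helpers
variable {E : Type*} [NormedAddCommGroup E] [InnerProductSpace ℝ E]

lemma pab_norm_sq {e₁ e₂ : E} (h1 : ‖e₁‖ = 1) (h2 : ‖e₂‖ = 1) (h : inner ℝ e₁ e₂ = 0)
    (x y : ℝ) : ‖x • e₁ + y • e₂‖ ^ 2 = x ^ 2 + y ^ 2 := by
  rw [norm_add_sq_real, norm_smul, norm_smul, real_inner_smul_left, real_inner_smul_right,
    h, h1, h2]
  simp

lemma pab_arc {e₁ e₂ : E} (h1 : ‖e₁‖ = 1) (h2 : ‖e₂‖ = 1) (h : inner ℝ e₁ e₂ = 0)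
    (φ ψ : ℝ) :
    ‖(Real.cos φ - Real.cos ψ) • e₁ + (Real.sin φ - Real.sin ψ) • e₂‖ ≤ |φ - ψ| := by
  apply abs_le_of_sq_le_sq' _ (abs_nonneg _) |>.2
  rw [pab_norm_sq h1 h2 h, sq_abs]
  have := Real.one_sub_sq_div_two_le_cos (x := φ - ψ)
  rw [Real.cos_sub] at this
  nlinarith [Real.sin_sq_add_cos_sq φ, Real.sin_sq_add_cos_sq ψ]

lemma pab_clamp (c : ℝ) (s t : ℝ) :
    |max (-c) (min s c) - max (-c) (min t c)|
      + |(s - max (-c) (min s c)) - (t - max (-c) (min t c))| ≤ |s - t| := by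
  wlog hst : s ≤ t generalizing s t
  · have := this t s (by linarith)
    rw [abs_sub_comm s t, abs_sub_comm (max (-c) (min s c)),
      abs_sub_comm (s - _)]
    exact this
  have A : max (-c) (min s c) ≤ max (-c) (min t c) := by gcongr
  have B : s - max (-c) (min s c) ≤ t - max (-c) (min t c) := by
    rcases max_cases (-c) (min s c) with h | h <;> rcases max_cases (-c) (min t c) with h' | h' <;>
    rcases min_cases s c with h'' | h'' <;> rcases min_cases t c with h3 | h3 <;> linarith
  rw [abs_of_nonpos (by linarith), abs_of_nonpos (by linarith), abs_of_nonpos (by linarith)]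
  linarith

lemma pab_core {e₁ e₂ : E} (h1 : ‖e₁‖ = 1) (h2 : ‖e₂‖ = 1) (h : inner ℝ e₁ e₂ = 0)
    (ρ r a b : ℝ) (hr : 0 ≤ r) (hrρ : r < ρ) (ha : ρ ^ 2 ≤ r ^ 2 + a ^ 2)
    (hb : ρ ^ 2 ≤ r ^ 2 + b ^ 2) :
    ∃ γ : ℝ → E, (∀ s t, ‖γ s - γ t‖ ≤ π / 2 * |s - t|) ∧
      γ a = r • e₁ + a • e₂ ∧ γ b = r • e₁ + b • e₂ ∧
      (∀ s, ρ ≤ ‖γ s‖) ∧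
      (∀ s ∈ Set.Icc a b, ∃ t ∈ Set.Icc a b, ‖γ s - (r • e₁ + t • e₂)‖ ≤ ρ) := by
  have hρ : 0 < ρ := by linarith
  obtain ⟨α, hα⟩ : ∃ α, α = Real.arccos (r / ρ) := ⟨_, rfl⟩
  have hcos : ρ * Real.cos α = r := by
    rw [hα, Real.cos_arccos]
    · field_simp
    · have : 0 ≤ r / ρ := by positivity
      linarith
    · rw [div_le_one hρ]; linarith
  have hα0 : 0 < α := by
    rw [hα, Real.arccos_pos, div_lt_one hρ]; exact hrρ
  have hα1 : α ≤ π / 2 := by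
    rw [hα, Real.arccos_le_pi_div_two]; positivity
  obtain ⟨c, hc⟩ : ∃ c, c = ρ * Real.sin α := ⟨_, rfl⟩
  have hpi := Real.pi_pos
  have hsin : 0 < Real.sin α := Real.sin_pos_of_pos_of_lt_pi hα0 (by linarith)
  have hc0 : 0 < c := by rw [hc]; positivity
  have hcr : c ^ 2 = ρ ^ 2 - r ^ 2 := by
    rw [hc, ← hcos]; nlinarith [Real.sin_sq_add_cos_sq α]
  have hac : c ≤ |a| := by
    apply abs_le_of_sq_le_sq' _ (abs_nonneg _) |>.2
    rw [sq_abs]; linarith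
  have hbc : c ≤ |b| := by
    apply abs_le_of_sq_le_sq' _ (abs_nonneg _) |>.2
    rw [sq_abs]; linarith
  have hspeed : ρ * (α / c) ≤ π / 2 := by
    have := Real.mul_le_sin hα0.le hα1
    rw [← mul_div_assoc, div_le_iff₀ hc0, hc]
    have h3 : α ≤ π / 2 * Real.sin α := by
      calc α = π / 2 * (2 / π * α) := by field_simp
        _ ≤ _ := by gcongr
    nlinarith
  obtain ⟨f, hf⟩ : ∃ f : ℝ → ℝ, f = fun s => max (-c) (min s c) := ⟨_, rfl⟩
  have hfl : ∀ s t, |f s - f t| + |(s - f s) - (t - f t)| ≤ |s - t| := by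
    intro s t; rw [hf]; exact pab_clamp c s t
  have hfc : ∀ s, (s ≤ -c ∧ f s = -c) ∨ (c ≤ s ∧ f s = c) ∨ (-c < s ∧ s < c ∧ f s = s) := by
    intro s
    rw [hf]
    rcases le_or_gt s (-c) with h5 | h5
    · left; refine ⟨h5, ?_⟩
      simp only
      rw [min_eq_left (by linarith), max_eq_left h5]
    rcases le_or_gt c s with h6 | h6
    · right; left; refine ⟨h6, ?_⟩
      simp only
      rw [min_eq_right h6, max_eq_right (by linarith)]
    · right; right; refine ⟨h5, h6, ?_⟩
      simp only
      rw [min_eq_left h6.le, max_eq_right h5.le]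
  have hang : α / c * c = α := by field_simp
  have hout : ∀ s, c ≤ |s| → ρ * Real.cos (α / c * f s) = r ∧
      ρ * Real.sin (α / c * f s) + (s - f s) = s := by
    intro s hs
    rcases hfc s with ⟨_, h5⟩ | ⟨_, h5⟩ | ⟨h6, h7, _⟩
    · rw [h5, mul_neg, hang, Real.cos_neg, Real.sin_neg]
      exact ⟨hcos, by rw [hc]; ring⟩
    · rw [h5, hang]
      exact ⟨hcos, by rw [hc]; ring⟩
    · exact absurd (abs_lt.2 ⟨h6, h7⟩) (not_lt.2 hs)
  have hfab : ∀ s, |α / c * f s| ≤ α := by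
    intro s
    rw [abs_mul, abs_of_pos (by positivity : 0 < α / c)]
    have : |f s| ≤ c := by
      rw [abs_le]
      rcases hfc s with ⟨_, h5⟩ | ⟨_, h5⟩ | ⟨h6, h7, h5⟩ <;> rw [h5] <;> constructor <;> linarith
    calc α / c * |f s| ≤ α / c * c := by gcongr
      _ = α := hang
  refine ⟨fun s => (ρ * Real.cos (α / c * f s)) • e₁
    + (ρ * Real.sin (α / c * f s) + (s - f s)) • e₂, ?_, ?_, ?_, ?_, ?_⟩
  · intro s t
    simp only
    have : (ρ * Real.cos (α / c * f s)) • e₁ + (ρ * Real.sin (α / c * f s) + (s - f s)) • e₂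
      - ((ρ * Real.cos (α / c * f t)) • e₁ + (ρ * Real.sin (α / c * f t) + (t - f t)) • e₂)
      = ρ • ((Real.cos (α / c * f s) - Real.cos (α / c * f t)) • e₁ +
          (Real.sin (α / c * f s) - Real.sin (α / c * f t)) • e₂)
        + ((s - f s) - (t - f t)) • e₂ := by module
    rw [this]
    refine (norm_add_le _ _).trans ?_
    rw [norm_smul, norm_smul, h2, mul_one, Real.norm_eq_abs, Real.norm_eq_abs, abs_of_pos hρ]
    have A := pab_arc h1 h2 h (α / c * f s) (α / c * f t)
    rw [← mul_sub, abs_mul, abs_of_pos (by positivity : 0 < α / c)] at A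
    have h1pi : 1 ≤ π / 2 := by linarith [Real.pi_gt_three]
    calc _ ≤ ρ * (α / c * |f s - f t|) + |(s - f s) - (t - f t)| := by gcongr
      _ = (ρ * (α / c)) * |f s - f t| + 1 * |(s - f s) - (t - f t)| := by ring
      _ ≤ π / 2 * |f s - f t| + π / 2 * |(s - f s) - (t - f t)| := by gcongr
      _ = π / 2 * (|f s - f t| + |(s - f s) - (t - f t)|) := by ring
      _ ≤ _ := by gcongr; exact hfl s t
  · simp only
    rw [(hout a hac).1, (hout a hac).2]
  · simp only
    rw [(hout b hbc).1, (hout b hbc).2]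
  · intro s
    apply abs_le_of_sq_le_sq' _ (norm_nonneg _) |>.2
    simp only
    rw [pab_norm_sq h1 h2 h]
    have key : 0 ≤ Real.sin (α / c * f s) * (s - f s) := by
      rcases hfc s with ⟨h6, h5⟩ | ⟨h6, h5⟩ | ⟨h6, h7, h5⟩
      · rw [h5, mul_neg, hang, Real.sin_neg]; nlinarith
      · rw [h5, hang]; apply mul_nonneg hsin.le; linarith
      · rw [h5]; simp
    have := Real.sin_sq_add_cos_sq (α / c * f s)
    nlinarith [mul_nonneg hρ.le key, sq_nonneg (s - f s)]
  · intro s hs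
    refine ⟨ρ * Real.sin (α / c * f s) + (s - f s), ?_, ?_⟩
    · by_cases hcs : c ≤ |s|
      · rw [(hout s hcs).2]; exact hs
      · push Not at hcs
        have hcs' := abs_lt.1 hcs
        have e : f s = s := by
          rcases hfc s with ⟨h6, h5⟩ | ⟨h6, h5⟩ | ⟨h6, h7, h5⟩
          · linarith
          · linarith
          · exact h5
        have hle := abs_le.1 (hfab s)
        have u1 : Real.sin (α / c * f s) ≤ Real.sin α :=
          Real.sin_le_sin_of_le_of_le_pi_div_two (by linarith) hα1 hle.2
        have u2 : Real.sin (-α) ≤ Real.sin (α / c * f s) :=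
          Real.sin_le_sin_of_le_of_le_pi_div_two (by linarith) (by linarith) hle.1
        rw [Real.sin_neg] at u2
        have v1 : a ≤ -c := by
          rcases le_abs.1 hac with q | q
          · linarith [hs.1]
          · linarith
        have v2 : c ≤ b := by
          rcases le_abs.1 hbc with q | q
          · linarith
          · linarith [hs.2]
        have u1' := mul_le_mul_of_nonneg_left u1 hρ.le
        have u2' := mul_le_mul_of_nonneg_left u2 hρ.le
        constructor <;> linarith
    · have : ∀ y : ℝ, (ρ * Real.cos (α / c * f s)) • e₁ + y • e₂ - (r • e₁ + y • e₂)
        = (ρ * Real.cos (α / c * f s) - r) • e₁ := by intro y; module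
      simp only
      rw [this, norm_smul, h1, mul_one, Real.norm_eq_abs]
      have h8 : Real.cos α ≤ Real.cos (α / c * f s) := by
        rw [← Real.cos_abs (α / c * f s)]
        exact Real.cos_le_cos_of_nonneg_of_le_pi (abs_nonneg _) (by linarith) (hfab s)
      have h9 := Real.cos_le_one (α / c * f s)
      rw [abs_le]; constructor <;> nlinarith

lemma pab_perp (hdim : 2 ≤ Module.rank ℝ E) {e : E} (he : ‖e‖ = 1) :
    ∃ v : E, ‖v‖ = 1 ∧ inner ℝ v e = 0 := by
  have : ∃ v : E, v ≠ 0 ∧ inner ℝ v e = 0 := by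
    by_contra! H
    have : Module.rank ℝ E ≤ 1 := by
      rw [rank_le_one_iff]
      refine ⟨e, fun v => ⟨inner ℝ v e, ?_⟩⟩
      by_contra hne
      apply H (v - (inner ℝ v e : ℝ) • e) (fun h0 => hne (sub_eq_zero.1 h0).symm)
      rw [inner_sub_left, real_inner_smul_left, real_inner_self_eq_norm_sq, he]; ring
    have := hdim.trans this
    exact absurd this (by norm_num)
  obtain ⟨v, hv, hve⟩ := this
  refine ⟨‖v‖⁻¹ • v, ?_, ?_⟩
  · rw [norm_smul, norm_inv, norm_norm, inv_mul_cancel₀ (norm_ne_zero_iff.2 hv)]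
  · rw [real_inner_smul_left, hve, mul_zero]

end helpers

/-- The path-construction claim from the proof of Lemma 6.8: in a real inner
product space of dimension at least 2, given `z, z', w` and `ρ > 0` with
`ρ ≤ ‖z − w‖` and `ρ ≤ ‖z' − w‖`, there is a path `γ : [0,1] → E` from `z` to
`z'`, Lipschitz with constant `(π/2)·‖z − z'‖` (hence of length at most
`(π/2)·‖z − z'‖`), staying at distance at least `ρ` from `w`, and such that
every point of the path lies within distance `ρ` of the segment from `z` to
`z'`. -/
theorem path_around_ball {E : Type*} [NormedAddCommGroup E] [InnerProductSpace ℝ E]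
    (hdim : 2 ≤ Module.rank ℝ E) (z z' w : E) (ρ : ℝ) (hρ : 0 < ρ)
    (hz : ρ ≤ ‖z - w‖) (hz' : ρ ≤ ‖z' - w‖) :
    ∃ γ : ℝ → E,
      (∀ t ∈ Set.Icc (0 : ℝ) 1, ∀ t' ∈ Set.Icc (0 : ℝ) 1,
        ‖γ t - γ t'‖ ≤ π / 2 * ‖z - z'‖ * |t - t'|) ∧
      γ 0 = z ∧ γ 1 = z' ∧
      (∀ t ∈ Set.Icc (0 : ℝ) 1, ρ ≤ ‖γ t - w‖) ∧
      (∀ t ∈ Set.Icc (0 : ℝ) 1, ∃ s ∈ Set.Icc (0 : ℝ) 1,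
        ‖γ t - (z + s • (z' - z))‖ ≤ ρ) := by
  rcases eq_or_ne z z' with rfl | hne
  · refine ⟨fun _ => z, ?_, rfl, rfl, fun _ _ => hz, fun _ _ => ⟨0, by simp, by simpa using hρ.le⟩⟩
    intro t _ t' _; simp
  have hd : 0 < ‖z' - z‖ := norm_pos_iff.2 (sub_ne_zero.2 hne.symm)
  obtain ⟨d, hdd⟩ : ∃ d, d = ‖z' - z‖ := ⟨_, rfl⟩
  rw [← hdd] at hd
  obtain ⟨e₂, he₂⟩ : ∃ e₂, e₂ = d⁻¹ • (z' - z) := ⟨_, rfl⟩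
  have hn2 : ‖e₂‖ = 1 := by
    rw [he₂, norm_smul, norm_inv, Real.norm_eq_abs, abs_of_pos hd, ← hdd, inv_mul_cancel₀ hd.ne']
  have hde : z' - z = d • e₂ := by rw [he₂, smul_inv_smul₀ hd.ne']
  obtain ⟨a, ha⟩ : ∃ a : ℝ, a = inner ℝ (z - w) e₂ := ⟨_, rfl⟩
  obtain ⟨k, hk⟩ : ∃ k, k = z - w - a • e₂ := ⟨_, rfl⟩
  have hke : inner ℝ k e₂ = 0 := by
    rw [hk, inner_sub_left, real_inner_smul_left, real_inner_self_eq_norm_sq, hn2, ha]; ring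
  obtain ⟨e₁, hn1, h12, hke1⟩ : ∃ e₁ : E, ‖e₁‖ = 1 ∧ inner ℝ e₁ e₂ = 0 ∧ k = ‖k‖ • e₁ := by
    by_cases hk0 : k = 0
    · obtain ⟨v, hv, hv'⟩ := pab_perp hdim hn2
      exact ⟨v, hv, hv', by simp [hk0]⟩
    · have := norm_ne_zero_iff.2 hk0
      refine ⟨‖k‖⁻¹ • k, ?_, ?_, ?_⟩
      · rw [norm_smul, norm_inv, norm_norm, inv_mul_cancel₀ this]
      · rw [real_inner_smul_left, hke, mul_zero]
      · rw [smul_inv_smul₀ this]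
  obtain ⟨r, hr⟩ : ∃ r, r = ‖k‖ := ⟨_, rfl⟩
  have hr0 : 0 ≤ r := hr ▸ norm_nonneg _
  rw [← hr] at hke1
  have hzw : z - w = r • e₁ + a • e₂ := by rw [← hke1, hk]; abel
  have hzw' : z' - w = r • e₁ + (a + d) • e₂ := by
    rw [add_smul, ← hde, ← add_assoc, ← hzw]; abel
  have hzd : ‖z - z'‖ = d := by rw [norm_sub_rev, hdd]
  have hze : z = w + (r • e₁ + a • e₂) := by rw [← hzw]; abel
  have hze' : z' = w + (r • e₁ + (a + d) • e₂) := by rw [← hzw']; abel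
  have hpi := Real.pi_gt_three
  rcases le_or_gt ρ r with hρr | hρr
  · refine ⟨fun t => z + t • (z' - z), ?_, by simp, by simp, ?_, ?_⟩
    · intro t _ t' _
      have : z + t • (z' - z) - (z + t' • (z' - z)) = (t - t') • (z' - z) := by module
      simp only
      rw [this, norm_smul, hzd, ← hdd, Real.norm_eq_abs]
      nlinarith [mul_nonneg hd.le (abs_nonneg (t - t'))]
    · intro t _
      apply abs_le_of_sq_le_sq' _ (norm_nonneg _) |>.2
      have : z + t • (z' - z) - w = r • e₁ + (a + t * d) • e₂ := by
        rw [hde, hze]; module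
      simp only
      rw [this, pab_norm_sq hn1 hn2 h12]
      nlinarith [sq_nonneg (a + t * d)]
    · intro t ht
      exact ⟨t, ht, by simpa using hρ.le⟩
  · have A : ρ ^ 2 ≤ r ^ 2 + a ^ 2 := by
      rw [← pab_norm_sq hn1 hn2 h12, ← hzw]; gcongr
    have B : ρ ^ 2 ≤ r ^ 2 + (a + d) ^ 2 := by
      rw [← pab_norm_sq hn1 hn2 h12, ← hzw']; gcongr
    obtain ⟨γ, g1, g2, g3, g4, g5⟩ := pab_core hn1 hn2 h12 ρ r a (a + d) hr0 hρr A B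
    refine ⟨fun t => w + γ (a + t * d), ?_, ?_, ?_, ?_, ?_⟩
    · intro t _ t' _
      have := g1 (a + t * d) (a + t' * d)
      have e : a + t * d - (a + t' * d) = d * (t - t') := by ring
      rw [e, abs_mul, abs_of_pos hd, ← mul_assoc] at this
      simpa [hzd] using this
    · simp only [zero_mul, add_zero]
      rw [g2, ← hze]
    · simp only [one_mul]
      rw [g3, ← hze']
    · intro t _
      simpa using g4 (a + t * d)
    · intro t ht
      obtain ⟨s, hs, hs'⟩ := g5 (a + t * d) ⟨by nlinarith [ht.1], by nlinarith [ht.2]⟩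
      refine ⟨(s - a) / d, ⟨div_nonneg (by linarith [hs.1]) hd.le, ?_⟩, ?_⟩
      · rw [div_le_one hd]; linarith [hs.2]
      · have : w + γ (a + t * d) - (z + ((s - a) / d) • (z' - z))
            = γ (a + t * d) - (r • e₁ + s • e₂) := by
          rw [hde, smul_smul, div_mul_cancel₀ _ hd.ne', hze]; module
        simp only
        rw [this]; exact hs'
end

section
/- Let d ≥ 1 be an integer, let r₀ ∈ (0,1], and let c, c' ≥ 0. Then for every ε > 0 there exists δ > 0 such that for every w ∈ ℂ^d and every Lebesgue-measurable set T ⊆ ℂ^d of Lebesgue measure at most δ, one has ∫_T ( c + c'·(−log min{r₀, |w − z|}) ) / ( min{r₀, |w − z|} )^{2d−2} dμ(z) ≤ ε. (Claim (7.5.5) proved inside the proof of Lemma 7.5: uniform absolute continuity of the integrals of the translated kernel.) -/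
open MeasureTheory

theorem aux_integrable (d : ℕ) (hd : 1 ≤ d)
    (r₀ : ℝ) (hr₀ : 0 < r₀) (hr₀' : r₀ ≤ 1) (c c' : ℝ) (hc : 0 ≤ c) (hc' : 0 ≤ c') :
    Integrable (fun x : EuclideanSpace ℝ (Fin (2 * d)) => (Set.Iio r₀).indicator
      (fun y : ℝ => (c + c' * (-Real.log (min r₀ y))) / (min r₀ y) ^ (2 * d - 2)) ‖x‖) volume := by
  have : Nontrivial (EuclideanSpace ℝ (Fin (2 * d))) := by
    apply Module.nontrivial_of_finrank_pos (R := ℝ)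
    simp; omega
  rw [integrable_fun_norm_addHaar (volume : Measure (EuclideanSpace ℝ (Fin (2 * d))))
    (f := (Set.Iio r₀).indicator
      (fun y : ℝ => (c + c' * (-Real.log (min r₀ y))) / (min r₀ y) ^ (2 * d - 2)))]
  have hm : Measurable (fun y : ℝ =>
      (c + c' * (-Real.log (min r₀ y))) / (min r₀ y) ^ (2 * d - 2)) := by fun_prop
  have hI : IntegrableOn ((Set.Ioo 0 r₀).indicator (fun _ : ℝ => c + c')) (Set.Ioi 0) volume := by
    apply Integrable.integrableOn
    rw [integrable_indicator_iff measurableSet_Ioo]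
    exact integrableOn_const (by simp)
  refine Integrable.mono' hI ?_ ?_
  · apply Measurable.aestronglyMeasurable
    have := hm.indicator (measurableSet_Iio (a := r₀))
    simp only [smul_eq_mul]
    exact (measurable_id.pow_const _).mul this
  · refine (ae_restrict_iff' measurableSet_Ioi).2 (Filter.Eventually.of_forall fun y hy => ?_)
    have hy : 0 < y := hy
    by_cases h : y < r₀
    · rw [Set.indicator_of_mem (show y ∈ Set.Iio r₀ from h),
        Set.indicator_of_mem (show y ∈ Set.Ioo 0 r₀ from ⟨hy, h⟩), min_eq_right h.le]
      have h1 : y ≤ 1 := h.le.trans hr₀'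
      have hl : Real.log y ≤ 0 := Real.log_nonpos hy.le h1
      have hl2 : -Real.log y ≤ y⁻¹ := by
        rw [← Real.log_inv]
        have := Real.log_le_sub_one_of_pos (inv_pos.2 hy)
        linarith
      have he : Module.finrank ℝ (EuclideanSpace ℝ (Fin (2 * d))) - 1 = (2 * d - 2) + 1 := by
        simp; omega
      rw [he, smul_eq_mul, pow_succ]
      have hp : y ^ (2 * d - 2) ≠ 0 := (pow_pos hy _).ne'
      have e2 : y ^ (2 * d - 2) * y * ((c + c' * -Real.log y) / y ^ (2 * d - 2))
        = y * c + c' * (y * -Real.log y) := by field_simp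
      have h3 : y * -Real.log y ≤ 1 := by
        have := mul_le_mul_of_nonneg_left hl2 hy.le
        rwa [mul_inv_cancel₀ hy.ne'] at this
      have h4 : 0 ≤ y * -Real.log y := mul_nonneg hy.le (by linarith)
      rw [e2, Real.norm_of_nonneg (by positivity)]
      nlinarith
    · rw [Set.indicator_of_notMem (show y ∉ Set.Iio r₀ from h),
        Set.indicator_of_notMem (fun h' => h h'.2)]
      simp

/-- Claim (7.5.5) from the proof of Lemma 7.5 (uniform absolute continuity of
the integrals of the translated kernel), with `ℂ^d` identified with `ℝ^{2d}`:
for `d ≥ 1`, `r₀ ∈ (0,1]` and `c, c' ≥ 0`, for every `ε > 0` there is `δ > 0`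
such that for every `w` and every measurable set `T` of Lebesgue measure at
most `δ`,
`∫_T (c + c'·(−log min {r₀, |w − z|})) / (min {r₀, |w − z|})^{2d−2} dμ(z) ≤ ε`. -/
theorem uniform_absolute_continuity (d : ℕ) (hd : 1 ≤ d)
    (r₀ : ℝ) (hr₀ : 0 < r₀) (hr₀' : r₀ ≤ 1) (c c' : ℝ) (hc : 0 ≤ c) (hc' : 0 ≤ c') :
    ∀ ε > (0 : ℝ), ∃ δ > (0 : ℝ),
      ∀ (w : EuclideanSpace ℝ (Fin (2 * d))) (T : Set (EuclideanSpace ℝ (Fin (2 * d)))),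
        MeasurableSet T → volume T ≤ ENNReal.ofReal δ →
        ∫⁻ z in T, ENNReal.ofReal
            ((c + c' * (-Real.log (min r₀ ‖w - z‖))) / (min r₀ ‖w - z‖) ^ (2 * d - 2))
          ∂volume ≤ ENNReal.ofReal ε := by
  intro ε hε
  have hint := aux_integrable d hd r₀ hr₀ hr₀' c c' hc hc'
  set G : ℝ → ℝ := fun y => (c + c' * (-Real.log (min r₀ y))) / (min r₀ y) ^ (2 * d - 2) with hG
  have hGm : Measurable G := by fun_prop
  set F : EuclideanSpace ℝ (Fin (2 * d)) → ENNReal :=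
    fun x => ENNReal.ofReal ((Set.Iio r₀).indicator G ‖x‖) with hF
  have hFm : Measurable F :=
    ((hGm.indicator measurableSet_Iio).comp measurable_norm).ennreal_ofReal
  have hFi : ∫⁻ x, F x ≠ ⊤ := hint.lintegral_lt_top.ne
  obtain ⟨δ₁, hδ₁, H⟩ := exists_pos_setLIntegral_lt_of_measure_lt hFi
    (ε := ENNReal.ofReal (ε / 2)) (by simpa using hε)
  obtain ⟨η, hη0, hη⟩ := ENNReal.lt_iff_exists_nnreal_btwn.1 hδ₁
  have hη0 : 0 < (η : ℝ) := by exact_mod_cast hη0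
  set K : ℝ := |G r₀| with hK
  have hK0 : 0 ≤ K := abs_nonneg _
  refine ⟨min η (ε / (2 * (K + 1))), lt_min hη0 (by positivity), ?_⟩
  intro w T hT hvT
  have mp : MeasurePreserving (fun z : EuclideanSpace ℝ (Fin (2 * d)) => w - z) volume volume :=
    Measure.measurePreserving_sub_left volume w
  set S := (fun z : EuclideanSpace ℝ (Fin (2 * d)) => w - z) ⁻¹' T with hS
  have hSm : MeasurableSet S := mp.measurable hT
  have hTS : T = (fun z : EuclideanSpace ℝ (Fin (2 * d)) => w - z) ⁻¹' S := by
    ext z; simp [hS]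
  have hvS : volume S = volume T := mp.measure_preimage hT.nullMeasurableSet
  have hle : ∀ x : EuclideanSpace ℝ (Fin (2 * d)),
      ENNReal.ofReal (G ‖x‖) ≤ F x + ENNReal.ofReal K := by
    intro x
    by_cases h : ‖x‖ < r₀
    · simp only [hF]
      rw [Set.indicator_of_mem (show ‖x‖ ∈ Set.Iio r₀ from h)]
      exact le_self_add
    · have : G ‖x‖ = G r₀ := by
        simp only [hG]; rw [min_eq_left (not_lt.1 h), min_self]
      rw [this]
      exact (ENNReal.ofReal_le_ofReal (le_abs_self _)).trans le_add_self
  calc ∫⁻ z in T, ENNReal.ofReal (G ‖w - z‖)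
      = ∫⁻ x in S, ENNReal.ofReal (G ‖x‖) := by
        rw [hTS]
        exact mp.setLIntegral_comp_preimage hSm
          (f := fun x => ENNReal.ofReal (G ‖x‖)) (hGm.comp measurable_norm).ennreal_ofReal
    _ ≤ ∫⁻ x in S, (F x + ENNReal.ofReal K) := lintegral_mono hle
    _ = (∫⁻ x in S, F x) + ENNReal.ofReal K * volume S := by
        rw [lintegral_add_left hFm, setLIntegral_const]
    _ ≤ ENNReal.ofReal (ε / 2) + ENNReal.ofReal (ε / 2) := by
        gcongr
        · refine (H S (lt_of_le_of_lt ?_ hη)).le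
          rw [hvS]
          refine hvT.trans ((ENNReal.ofReal_le_ofReal (min_le_left _ _)).trans ?_)
          simp
        · rw [hvS]
          calc _ ≤ ENNReal.ofReal K * ENNReal.ofReal (ε / (2 * (K + 1))) := by
                gcongr
                exact hvT.trans (ENNReal.ofReal_le_ofReal (min_le_right _ _))
            _ = ENNReal.ofReal (K * (ε / (2 * (K + 1)))) := (ENNReal.ofReal_mul hK0).symm
            _ ≤ _ := by
                apply ENNReal.ofReal_le_ofReal
                rw [mul_div_assoc', div_le_div_iff₀ (by positivity) (by positivity)]
                nlinarith
    _ = ENNReal.ofReal ε := by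
        rw [← ENNReal.ofReal_add (by positivity) (by positivity)]; congr 1; ring
end
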